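/- Let m ≥ 1, let C_i : ℝⁿ → ℝ^{n_i} (i = 1,…,m) be surjective linear maps, let p_i > 0 be reals, let 𝒬 be a symmetric positive semidefinite matrix on ℝⁿ, let I ⊆ {1,…,m}, and let Q_i be symmetric positive definite matrices on ℝ^{n_i}. Suppose that for each i ∈ I the nonnegative function f_i ∈ L¹(ℝ^{n_i}) is more log-convex than g_{Q_i}, and for each j ∉ I the nonnegative function f_j ∈ L¹(ℝ^{n_j}) is more log-concave than g_{Q_j}. Then ∫_{ℝⁿ} e^{−π⟨𝒬x,x⟩} ∏_{i=1}^m f_i(C_i x)^{p_i} dx ≤ S · ∏_{i=1}^m (∫_{ℝ^{n_i}} f_i)^{p_i}, where S = sup{ (∏_{i=1}^m det(B_i)^{p_i} / det(𝒬 + ∑_{i=1}^m p_i C_iᵀ B_i C_i))^{1/2} : B_i symmetric with 0 < B_i ≤ Q_i for i ∈ I and B_j ≥ Q_j for j ∉ I }. -/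

import Mathlib

open MeasureTheory Matrix
open scoped ENNReal

noncomputable section

/-- The centered Gaussian function attached to a matrix `Q` : `g_Q(x) = exp(-π⟨Qx,x⟩)`. -/
def gaussFn {k : ℕ} (Q : Matrix (Fin k) (Fin k) ℝ) (x : Fin k → ℝ) : ℝ :=
  Real.exp (-Real.pi * (Q.mulVec x ⬝ᵥ x))

/-- A nonnegative log-convex function. -/
def LogConvexFun {k : ℕ} (h : (Fin k → ℝ) → ℝ) : Prop :=
  (∀ x, 0 ≤ h x) ∧
    ∀ x y : Fin k → ℝ, ∀ a b : ℝ, 0 ≤ a → 0 ≤ b → a + b = 1 →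
      h (a • x + b • y) ≤ h x ^ a * h y ^ b

/-- A nonnegative log-concave function. -/
def LogConcaveFun {k : ℕ} (h : (Fin k → ℝ) → ℝ) : Prop :=
  (∀ x, 0 ≤ h x) ∧
    ∀ x y : Fin k → ℝ, ∀ a b : ℝ, 0 ≤ a → 0 ≤ b → a + b = 1 →
      h x ^ a * h y ^ b ≤ h (a • x + b • y)

/-- `f` is more log-convex than `g_Q`, i.e. `f = g_Q · h` with `h` log-convex. -/
def MoreLogConvex {k : ℕ} (f : (Fin k → ℝ) → ℝ) (Q : Matrix (Fin k) (Fin k) ℝ) : Prop :=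
  ∃ h : (Fin k → ℝ) → ℝ, LogConvexFun h ∧ f = fun x => gaussFn Q x * h x

/-- `f` is more log-concave than `g_Q`, i.e. `f = g_Q · h` with `h` log-concave. -/
def MoreLogConcave {k : ℕ} (f : (Fin k → ℝ) → ℝ) (Q : Matrix (Fin k) (Fin k) ℝ) : Prop :=
  ∃ h : (Fin k → ℝ) → ℝ, LogConcaveFun h ∧ f = fun x => gaussFn Q x * h x

open Set Pointwise in
/-- One-dimensional Brunn–Minkowski inequality. -/
theorem volume_add_le_of_add_subset {A B D : Set ℝ} (hA : MeasurableSet A) (hB : MeasurableSet B)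
    (hA0 : A.Nonempty) (hB0 : B.Nonempty) (h : ∀ x ∈ A, ∀ y ∈ B, x + y ∈ D) :
    volume A + volume B ≤ volume D := by
  have key : ∀ K L : Set ℝ, IsCompact K → IsCompact L → K.Nonempty → L.Nonempty → K ⊆ A → L ⊆ B →
      volume K + volume L ≤ volume D := by
    intro K L hK hL hK0 hL0 hKA hLB
    obtain ⟨k, hk, hkmax⟩ := hK.exists_isGreatest hK0
    obtain ⟨l, hl, hlmin⟩ := hL.exists_isLeast hL0
    have h1 : volume ((fun x => x + l) '' K) = volume K := by simp
    have h2 : volume ((fun x => k + x) '' L) = volume L := by simp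
    have hm : MeasurableSet ((fun x => k + x) '' L) :=
      (hL.image (continuous_const.add continuous_id)).measurableSet
    have hi : volume (((fun x => x + l) '' K) ∩ ((fun x => k + x) '' L)) = 0 := by
      refine measure_mono_null (t := {k + l}) ?_ (by simp)
      rintro z ⟨⟨x, hx, rfl⟩, ⟨y, hy, hxy⟩⟩
      have := hkmax hx
      have := hlmin hy
      simp only at hxy ⊢
      rw [mem_singleton_iff]
      linarith
    rw [← h1, ← h2, ← measure_union_add_inter _ hm, hi, add_zero]
    refine measure_mono ?_
    rintro z (⟨x, hx, rfl⟩ | ⟨y, hy, rfl⟩)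
    · exact h _ (hKA hx) _ (hLB hl)
    · exact h _ (hKA hk) _ (hLB hy)
  obtain ⟨a, ha⟩ := hA0
  obtain ⟨b, hb⟩ := hB0
  rw [hA.measure_eq_iSup_isCompact, hB.measure_eq_iSup_isCompact]
  simp only [iSup_and']
  refine ENNReal.biSup_add_biSup_le' (p := fun K => K ⊆ A ∧ IsCompact K)
    (q := fun L => L ⊆ B ∧ IsCompact L) ⟨∅, by simp⟩ ⟨∅, by simp⟩ ?_
  rintro K ⟨hKA, hK⟩ L ⟨hLB, hL⟩
  exact le_trans
    (add_le_add (measure_mono (subset_insert a K)) (measure_mono (subset_insert b L)))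
    (key _ _ (hK.insert a) (hL.insert b) ⟨a, by simp⟩ ⟨b, by simp⟩
      (insert_subset ha hKA) (insert_subset hb hLB))

theorem ENNReal.geom_mean_le_arith_mean_weighted {a b : ℝ} (ha : 0 < a) (hb : 0 < b)
    (hab : a + b = 1) (x y : ℝ≥0∞) :
    x ^ a * y ^ b ≤ ENNReal.ofReal a * x + ENNReal.ofReal b * y := by
  rcases eq_or_ne x ∞ with rfl | hx
  · simp [ENNReal.mul_top, ha]
  rcases eq_or_ne y ∞ with rfl | hy
  · simp [ENNReal.mul_top, hb]
  lift x to NNReal using hx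
  lift y to NNReal using hy
  rw [← ENNReal.coe_rpow_of_nonneg _ ha.le, ← ENNReal.coe_rpow_of_nonneg _ hb.le]
  have := NNReal.geom_mean_le_arith_mean2_weighted a.toNNReal b.toNNReal x y (by
    rw [← Real.toNNReal_add ha.le hb.le, hab]; simp)
  rw [Real.coe_toNNReal _ ha.le, Real.coe_toNNReal _ hb.le] at this
  rw [ENNReal.ofReal, ENNReal.ofReal]
  exact_mod_cast this

/-- Layer cake formula for finite `ℝ≥0∞`-valued functions. -/
theorem lintegral_eq_lintegral_volume_lt {f : ℝ → ℝ≥0∞} (hf : Measurable f) (hfin : ∀ x, f x ≠ ∞) :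
    ∫⁻ x, f x = ∫⁻ t in Set.Ioi (0:ℝ), volume {x | ENNReal.ofReal t < f x} := by
  have h := lintegral_eq_lintegral_meas_lt volume (f := fun x => (f x).toReal)
    (.of_forall fun x => ENNReal.toReal_nonneg) hf.ennreal_toReal.aemeasurable
  simp only [ENNReal.ofReal_toReal (hfin _)] at h
  rw [h]
  refine setLIntegral_congr_fun measurableSet_Ioi fun t ht => ?_
  congr 1; ext x
  simp only [Set.mem_ofPred_eq]
  rw [ENNReal.ofReal_lt_iff_lt_toReal (le_of_lt ht) (hfin x)]

open Set Pointwise in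
private theorem prekopa_leindler_real_of_iSup_one {f g h : ℝ → ℝ≥0∞} (hf : Measurable f)
    (hg : Measurable g) {a b : ℝ} (ha : 0 < a) (hb : 0 < b) (hab : a + b = 1)
    (hh : Measurable h) (hf1 : ⨆ x, f x = 1) (hg1 : ⨆ x, g x = 1)
    (H : ∀ x y, f x ^ a * g y ^ b ≤ h (a * x + b * y)) :
    (∫⁻ x, f x) ^ a * (∫⁻ x, g x) ^ b ≤ ∫⁻ x, h x := by
  have hfle : ∀ x, f x ≤ 1 := fun x => hf1 ▸ le_iSup f x
  have hgle : ∀ x, g x ≤ 1 := fun x => hg1 ▸ le_iSup g x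
  have hle : ∫⁻ x, min (h x) 1 ≤ ∫⁻ x, h x := lintegral_mono fun x => min_le_left _ _
  refine le_trans (le_trans (ENNReal.geom_mean_le_arith_mean_weighted ha hb hab _ _) ?_) hle
  rw [lintegral_eq_lintegral_volume_lt hf fun x => ((hfle x).trans_lt ENNReal.one_lt_top).ne,
    lintegral_eq_lintegral_volume_lt hg fun x => ((hgle x).trans_lt ENNReal.one_lt_top).ne,
    lintegral_eq_lintegral_volume_lt (hh.min measurable_const)
      fun x => ((min_le_right _ _).trans_lt ENNReal.one_lt_top).ne,
    ← lintegral_const_mul' _ _ ENNReal.ofReal_ne_top,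
    ← lintegral_const_mul' _ _ ENNReal.ofReal_ne_top]
  have hmeas : Measurable fun t : ℝ => ENNReal.ofReal a * volume {x | ENNReal.ofReal t < f x} := by
    refine Measurable.const_mul (Antitone.measurable fun s t hst => measure_mono fun x hx => ?_) _
    exact lt_of_le_of_lt (ENNReal.ofReal_le_ofReal hst) hx
  rw [← lintegral_add_left hmeas]
  refine lintegral_mono fun t => ?_
  rcases le_or_gt 1 (ENNReal.ofReal t) with ht | ht
  · have e1 : {x | ENNReal.ofReal t < f x} = ∅ := by
      ext x; simpa using (hfle x).trans ht
    have e2 : {x | ENNReal.ofReal t < g x} = ∅ := by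
      ext x; simpa using (hgle x).trans ht
    simp [e1, e2]
  · have hA0 : {x | ENNReal.ofReal t < f x}.Nonempty := by
      rw [← hf1] at ht; exact lt_iSup_iff.1 ht
    have hB0 : {x | ENNReal.ofReal t < g x}.Nonempty := by
      rw [← hg1] at ht; exact lt_iSup_iff.1 ht
    have hA : MeasurableSet {x | ENNReal.ofReal t < f x} := measurableSet_lt measurable_const hf
    have hB : MeasurableSet {x | ENNReal.ofReal t < g x} := measurableSet_lt measurable_const hg
    have hva : volume (a • {x | ENNReal.ofReal t < f x}) =
        ENNReal.ofReal a * volume {x | ENNReal.ofReal t < f x} := by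
      rw [Measure.addHaar_smul]; simp [abs_of_pos ha]
    have hvb : volume (b • {x | ENNReal.ofReal t < g x}) =
        ENNReal.ofReal b * volume {x | ENNReal.ofReal t < g x} := by
      rw [Measure.addHaar_smul]; simp [abs_of_pos hb]
    simp only
    rw [← hva, ← hvb]
    refine volume_add_le_of_add_subset (hA.const_smul₀ a) (hB.const_smul₀ b) hA0.smul_set
      hB0.smul_set ?_
    rintro _ ⟨x, hx, rfl⟩ _ ⟨y, hy, rfl⟩
    simp only [smul_eq_mul, mem_ofPred_eq] at hx hy ⊢
    refine lt_min (lt_of_lt_of_le (lt_min hx hy) (le_trans ?_ (H x y))) ht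
    set c := min (f x) (g y)
    calc c = c ^ a * c ^ b := by
          rw [← ENNReal.rpow_add_of_nonneg _ _ ha.le hb.le, hab, ENNReal.rpow_one]
      _ ≤ f x ^ a * g y ^ b :=
        mul_le_mul' (ENNReal.rpow_le_rpow (min_le_left _ _) ha.le)
          (ENNReal.rpow_le_rpow (min_le_right _ _) hb.le)

private theorem prekopa_leindler_real_of_bounded {f g h : ℝ → ℝ≥0∞} (hf : Measurable f)
    (hg : Measurable g) (hh : Measurable h) {a b : ℝ} (ha : 0 < a) (hb : 0 < b) (hab : a + b = 1)
    (hfb : ⨆ x, f x ≠ ∞) (hgb : ⨆ x, g x ≠ ∞)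
    (H : ∀ x y, f x ^ a * g y ^ b ≤ h (a * x + b * y)) :
    (∫⁻ x, f x) ^ a * (∫⁻ x, g x) ^ b ≤ ∫⁻ x, h x := by
  rcases eq_or_ne (⨆ x, f x) 0 with hf0 | hf0
  · have : ∀ x, f x = 0 := by simpa using hf0
    simp [this, ha]
  rcases eq_or_ne (⨆ x, g x) 0 with hg0 | hg0
  · have : ∀ x, g x = 0 := by simpa using hg0
    simp [this, hb]
  set F := ⨆ x, f x
  set G := ⨆ x, g x
  have hFa0 : F ^ a ≠ 0 := by simp [hf0, hfb]
  have hGb0 : G ^ b ≠ 0 := by simp [hg0, hgb]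
  have hFat : F ^ a ≠ ∞ := ENNReal.rpow_ne_top_of_nonneg ha.le hfb
  have hGbt : G ^ b ≠ ∞ := ENNReal.rpow_ne_top_of_nonneg hb.le hgb
  have := prekopa_leindler_real_of_iSup_one (f := fun x => F⁻¹ * f x) (g := fun x => G⁻¹ * g x)
    (h := fun x => (F ^ a * G ^ b)⁻¹ * h x) (hf.const_mul _) (hg.const_mul _) ha hb hab
    (hh.const_mul _) (by rw [← ENNReal.mul_iSup, ENNReal.inv_mul_cancel hf0 hfb])
    (by rw [← ENNReal.mul_iSup, ENNReal.inv_mul_cancel hg0 hgb]) (fun x y => by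
      rw [ENNReal.mul_rpow_of_nonneg _ _ ha.le, ENNReal.mul_rpow_of_nonneg _ _ hb.le,
        mul_mul_mul_comm, ENNReal.inv_rpow, ENNReal.inv_rpow,
        ENNReal.mul_inv (.inl hFa0) (.inl hFat)]
      exact mul_le_mul_right (H x y) _)
  rw [lintegral_const_mul _ hf, lintegral_const_mul _ hg, lintegral_const_mul _ hh,
    ENNReal.mul_rpow_of_nonneg _ _ ha.le, ENNReal.mul_rpow_of_nonneg _ _ hb.le,
    mul_mul_mul_comm, ENNReal.inv_rpow, ENNReal.inv_rpow,
    ← ENNReal.mul_inv (.inl hFa0) (.inl hFat)] at this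
  exact (ENNReal.mul_le_mul_iff_right (by simp [hFat, hGbt, ENNReal.mul_eq_top])
    (by simp [hFa0, hGb0])).1 this

/-- The Prékopa–Leindler inequality on the real line. -/
theorem prekopa_leindler_real {f g h : ℝ → ℝ≥0∞} (hf : Measurable f)
    (hg : Measurable g) (hh : Measurable h) {a b : ℝ} (ha : 0 < a) (hb : 0 < b) (hab : a + b = 1)
    (H : ∀ x y, f x ^ a * g y ^ b ≤ h (a * x + b * y)) :
    (∫⁻ x, f x) ^ a * (∫⁻ x, g x) ^ b ≤ ∫⁻ x, h x := by
  have trunc : ∀ f : ℝ → ℝ≥0∞, Measurable f →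
      Filter.Tendsto (fun N : ℕ => ∫⁻ x, min (f x) N) Filter.atTop (nhds (∫⁻ x, f x)) := by
    intro f hf
    refine lintegral_tendsto_of_tendsto_of_monotone
      (fun N => (hf.min measurable_const).aemeasurable) (.of_forall fun x => ?_)
      (.of_forall fun x => ?_)
    · intro N M hNM
      exact min_le_min le_rfl (by exact_mod_cast hNM)
    · have : Filter.Tendsto (fun N : ℕ => min (f x) (N : ℝ≥0∞)) Filter.atTop (nhds (min (f x) ∞)) :=
        tendsto_const_nhds.min ENNReal.tendsto_nat_nhds_top
      simpa using this
  have hlim : ∀ᶠ N : ℕ in Filter.atTop,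
      (∫⁻ x, min (f x) N) ^ a * (∫⁻ x, min (g x) N) ^ b ≤ ∫⁻ x, h x := by
    refine .of_forall fun N => ?_
    refine prekopa_leindler_real_of_bounded (hf.min measurable_const) (hg.min measurable_const)
      hh ha hb hab ?_ ?_ fun x y => le_trans ?_ (H x y)
    · exact ((iSup_le fun x => min_le_right _ _).trans_lt (ENNReal.natCast_lt_top N)).ne
    · exact ((iSup_le fun x => min_le_right _ _).trans_lt (ENNReal.natCast_lt_top N)).ne
    · exact mul_le_mul' (ENNReal.rpow_le_rpow (min_le_left _ _) ha.le)
          (ENNReal.rpow_le_rpow (min_le_left _ _) hb.le)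
  by_cases hf0 : ∫⁻ x, f x = 0
  · simp [hf0, ha]
  by_cases hg0 : ∫⁻ x, g x = 0
  · simp [hg0, hb]
  refine le_of_tendsto (ENNReal.Tendsto.mul ((trunc f hf).ennrpow_const a) (.inl ?_)
    ((trunc g hg).ennrpow_const b) (.inl ?_)) hlim
  · simp [hf0, ha.not_gt]
  · simp [hg0, hb.not_gt]

/-- The Prékopa–Leindler inequality. -/
theorem prekopa_leindler {k : ℕ} {f g h : (Fin k → ℝ) → ℝ≥0∞} (hf : Measurable f)
    (hg : Measurable g) (hh : Measurable h) {a b : ℝ} (ha : 0 < a) (hb : 0 < b) (hab : a + b = 1)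
    (H : ∀ x y, f x ^ a * g y ^ b ≤ h (a • x + b • y)) :
    (∫⁻ x, f x) ^ a * (∫⁻ x, g x) ^ b ≤ ∫⁻ x, h x := by
  induction k with
  | zero =>
    have := H default default
    have e : ∀ f : (Fin 0 → ℝ) → ℝ≥0∞, ∫⁻ x, f x = f default := fun f => by
      rw [volume_pi, lintegral_unique, Measure.pi_univ, Finset.univ_eq_empty,
        Finset.prod_empty, mul_one]
      exact congrArg f (Subsingleton.elim _ _)
    rw [Subsingleton.elim (a • (default : Fin 0 → ℝ) + b • default) default] at this
    rwa [e, e, e]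
  | succ k ih =>
    let e := MeasurableEquiv.piFinSuccAbove (fun _ : Fin (k + 1) => ℝ) 0
    have he : MeasurePreserving e.symm :=
      (volume_preserving_piFinSuccAbove (fun _ : Fin (k + 1) => ℝ) 0).symm
    have split : ∀ f : (Fin (k + 1) → ℝ) → ℝ≥0∞, Measurable f →
        ∫⁻ x, f x = ∫⁻ t : ℝ, ∫⁻ y : Fin k → ℝ, f (e.symm (t, y)) := by
      intro f hf
      rw [← he.lintegral_comp hf, Measure.volume_eq_prod,
        lintegral_prod (fun z => f (e.symm z)) (hf.comp e.symm.measurable).aemeasurable]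
    have meas : ∀ f : (Fin (k + 1) → ℝ) → ℝ≥0∞, Measurable f →
        Measurable fun t : ℝ => ∫⁻ y : Fin k → ℝ, f (e.symm (t, y)) := fun f hf =>
      (hf.comp e.symm.measurable).lintegral_prod_right'
    rw [split f hf, split g hg, split h hh]
    refine prekopa_leindler_real (meas f hf) (meas g hg) (meas h hh) ha hb hab fun s t => ?_
    refine ih (hf.comp (e.symm.measurable.comp measurable_prodMk_left))
      (hg.comp (e.symm.measurable.comp measurable_prodMk_left))
      (hh.comp (e.symm.measurable.comp measurable_prodMk_left)) fun x y => ?_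
    convert H (e.symm (s, x)) (e.symm (t, y)) using 2
    ext i
    refine Fin.cases ?_ (fun j => ?_) i <;>
      simp [e, MeasurableEquiv.piFinSuccAbove]

theorem gaussFn_pos {k : ℕ} (Q : Matrix (Fin k) (Fin k) ℝ) (x : Fin k → ℝ) : 0 < gaussFn Q x :=
  Real.exp_pos _

@[fun_prop]
theorem continuous_gaussFn {k : ℕ} (Q : Matrix (Fin k) (Fin k) ℝ) : Continuous (gaussFn Q) := by
  unfold gaussFn
  fun_prop

theorem gaussFn_le_one {k : ℕ} {Q : Matrix (Fin k) (Fin k) ℝ} (hQ : Q.PosSemidef)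
    (x : Fin k → ℝ) : gaussFn Q x ≤ 1 := by
  have := hQ.dotProduct_mulVec_nonneg x
  rw [star_trivial, dotProduct_comm] at this
  refine Real.exp_le_one_iff.2 ?_
  nlinarith [Real.pi_pos]

theorem gaussFn_rotate {k : ℕ} (Q : Matrix (Fin k) (Fin k) ℝ) (z w : Fin k → ℝ) :
    gaussFn Q ((√2)⁻¹ • (z + w)) * gaussFn Q ((√2)⁻¹ • (z - w)) = gaussFn Q z * gaussFn Q w := by
  have h2 : (√2)⁻¹ * (√2)⁻¹ = (2⁻¹ : ℝ) := by
    rw [← mul_inv, Real.mul_self_sqrt (by norm_num)]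
  simp only [gaussFn, ← Real.exp_add]
  congr 1
  simp only [mulVec_smul, mulVec_add, mulVec_sub, smul_dotProduct, dotProduct_smul,
    add_dotProduct, dotProduct_add, sub_dotProduct, dotProduct_sub, smul_eq_mul, ← mul_assoc]
  linear_combination (-2 * Real.pi * (Q *ᵥ z ⬝ᵥ z + Q *ᵥ w ⬝ᵥ w)) * h2

theorem gaussFn_neg {k : ℕ} (Q : Matrix (Fin k) (Fin k) ℝ) (x : Fin k → ℝ) :
    gaussFn Q (-x) = gaussFn Q x := by
  simp [gaussFn, mulVec_neg]

open scoped MatrixOrder Matrix.Norms.L2Operator in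
theorem Matrix.PosDef.exists_transpose_mul_self {k : ℕ} {B : Matrix (Fin k) (Fin k) ℝ}
    (hB : B.PosDef) : ∃ M : Matrix (Fin k) (Fin k) ℝ, B = Mᵀ * M ∧ M.det ≠ 0 := by
  obtain ⟨M, hM⟩ := CStarAlgebra.nonneg_iff_eq_star_mul_self.mp hB.posSemidef.nonneg
  have hM' : B = Mᵀ * M := by rw [hM, star_eq_conjTranspose, conjTranspose_eq_transpose_of_trivial]
  refine ⟨M, hM', fun h => ?_⟩
  have := hB.det_pos
  rw [hM', det_mul, h, mul_zero] at this
  exact lt_irrefl _ this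

theorem gaussFn_transpose_mul_self {k : ℕ} (M : Matrix (Fin k) (Fin k) ℝ) (x : Fin k → ℝ) :
    gaussFn (Mᵀ * M) x = Real.exp (-Real.pi * ∑ i, (M.mulVec x i) ^ 2) := by
  simp only [gaussFn]
  rw [← mulVec_mulVec, mulVec_transpose, ← dotProduct_mulVec]
  simp [dotProduct, sq]

/-- Fourier transform of a centered Gaussian. -/
theorem integral_gaussFn_mul_cexp {k : ℕ} {B : Matrix (Fin k) (Fin k) ℝ} (hB : B.PosDef)
    (c : Fin k → ℝ) :
    ∫ x, (gaussFn B x : ℂ) * Complex.exp ((c ⬝ᵥ x : ℝ) * Complex.I) =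
      ((√B.det)⁻¹ : ℝ) * Complex.exp ((-(c ⬝ᵥ B⁻¹.mulVec c) / (4 * Real.pi) : ℝ)) := by
  obtain ⟨M, rfl, hM⟩ := hB.exists_transpose_mul_self
  have hMu : IsUnit M.det := isUnit_iff_ne_zero.2 hM
  have hmap := Real.map_matrix_volume_pi_eq_smul_volume_pi hM
  set d : Fin k → ℝ := M⁻¹ᵀ.mulVec c with hd
  have hcd : ∀ x, c ⬝ᵥ x = d ⬝ᵥ M.mulVec x := by
    intro x
    rw [hd, mulVec_transpose, ← dotProduct_mulVec, mulVec_mulVec, nonsing_inv_mul _ hMu, one_mulVec]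
  have hdd : c ⬝ᵥ (Mᵀ * M)⁻¹.mulVec c = ∑ i, d i ^ 2 := by
    rw [Matrix.mul_inv_rev, ← mulVec_mulVec, dotProduct_mulVec, ← mulVec_transpose,
      ← transpose_nonsing_inv, ← hd]
    simp [dotProduct, sq]
  let F : (Fin k → ℝ) → ℂ := fun y =>
    Complex.exp (-(Real.pi : ℂ) * ∑ i, (y i : ℂ) ^ 2 + ∑ i, (d i * Complex.I : ℂ) * y i)
  have hFc : Continuous F := by fun_prop
  have h1 : ∀ x, (gaussFn (Mᵀ * M) x : ℂ) * Complex.exp ((c ⬝ᵥ x : ℝ) * Complex.I) =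
      F (toLin' M x) := by
    intro x
    simp only [F, gaussFn_transpose_mul_self, hcd, Complex.ofReal_exp, ← Complex.exp_add,
      toLin'_apply]
    congr 1
    simp only [dotProduct]
    push_cast
    rw [Finset.sum_mul]
    congr 1
    exact Finset.sum_congr rfl fun i _ => by ring
  simp_rw [h1]
  have hme : Measurable (toLin' M) := (LinearMap.continuous_of_finiteDimensional _).measurable
  rw [← integral_map (f := F) hme.aemeasurable hFc.aestronglyMeasurable, hmap,
    integral_smul_measure,
    GaussianFourier.integral_cexp_neg_mul_sum_add (by simpa using Real.pi_pos)]
  have hpi : (Real.pi : ℂ) ≠ 0 := by exact_mod_cast Real.pi_ne_zero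
  rw [div_self hpi, Complex.one_cpow, one_mul, hdd, det_mul, det_transpose,
    Real.sqrt_mul_self_eq_abs, ENNReal.toReal_ofReal (abs_nonneg _), abs_inv, Complex.real_smul]
  congr 2
  push_cast
  simp only [mul_pow, Complex.I_sq, mul_neg, mul_one, Finset.sum_neg_distrib]

theorem integrable_gaussFn {k : ℕ} {B : Matrix (Fin k) (Fin k) ℝ} (hB : B.PosDef) :
    Integrable (gaussFn B) := by
  have h := integral_gaussFn_mul_cexp hB 0
  have h0 : ∫ x, (gaussFn B x : ℂ) ≠ 0 := by
    simp only [zero_dotProduct, Complex.ofReal_zero, zero_mul, Complex.exp_zero, mul_one, neg_zero,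
      zero_div] at h
    rw [h]
    have := hB.det_pos
    simp [Real.sqrt_ne_zero'.2 this]
  have := Integrable.of_integral_ne_zero h0
  simpa using this.re

theorem integral_gaussFn {k : ℕ} {B : Matrix (Fin k) (Fin k) ℝ} (hB : B.PosDef) :
    ∫ x, gaussFn B x = (√B.det)⁻¹ := by
  have h := integral_gaussFn_mul_cexp hB 0
  simp only [zero_dotProduct, Complex.ofReal_zero, zero_mul, Complex.exp_zero, mul_one, neg_zero,
      zero_div, integral_complex_ofReal] at h
  exact_mod_cast h

theorem lintegral_gaussFn {k : ℕ} {B : Matrix (Fin k) (Fin k) ℝ} (hB : B.PosDef) :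
    ∫⁻ x, ENNReal.ofReal (gaussFn B x) = (ENNReal.ofReal B.det)⁻¹ ^ (2⁻¹ : ℝ) := by
  have hd := hB.det_pos
  rw [← ofReal_integral_eq_lintegral_ofReal (integrable_gaussFn hB)
    (.of_forall fun x => (gaussFn_pos B x).le), integral_gaussFn hB,
    ENNReal.ofReal_inv_of_pos (Real.sqrt_pos.2 hd), Real.sqrt_eq_rpow,
    ← ENNReal.ofReal_rpow_of_pos hd, ENNReal.inv_rpow]
  norm_num

namespace LogConvexFun

variable {k l : ℕ} {h h₁ h₂ : (Fin k → ℝ) → ℝ}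

protected theorem convexOn (hh : LogConvexFun h) : ConvexOn ℝ Set.univ h := by
  refine ⟨convex_univ, fun x _ y _ a b ha hb hab => (hh.2 x y a b ha hb hab).trans ?_⟩
  exact Real.geom_mean_le_arith_mean2_weighted ha hb (hh.1 x) (hh.1 y) hab

protected theorem continuous (hh : LogConvexFun h) : Continuous h :=
  hh.convexOn.locallyLipschitz.continuous

theorem sq_le (hh : LogConvexFun h) (x w : Fin k → ℝ) : h x ^ 2 ≤ h (x + w) * h (x - w) := by
  have h1 := hh.2 (x + w) (x - w) (1 / 2) (1 / 2) (by norm_num) (by norm_num) (by norm_num)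
  have e : (1 / 2 : ℝ) • (x + w) + (1 / 2 : ℝ) • (x - w) = x := by
    rw [← smul_add, add_add_sub_cancel, ← two_smul ℝ x, smul_smul]; norm_num
  rw [e, ← Real.sqrt_eq_rpow, ← Real.sqrt_eq_rpow, ← Real.sqrt_mul (hh.1 _)] at h1
  calc h x ^ 2 ≤ √(h (x + w) * h (x - w)) ^ 2 := pow_le_pow_left₀ (hh.1 x) h1 2
    _ = _ := Real.sq_sqrt (mul_nonneg (hh.1 _) (hh.1 _))

protected theorem mul (h1 : LogConvexFun h₁) (h2 : LogConvexFun h₂) :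
    LogConvexFun fun x => h₁ x * h₂ x := by
  refine ⟨fun x => mul_nonneg (h1.1 x) (h2.1 x), fun x y a b ha hb hab => ?_⟩
  rw [Real.mul_rpow (h1.1 x) (h2.1 x), Real.mul_rpow (h1.1 y) (h2.1 y), mul_mul_mul_comm]
  exact mul_le_mul (h1.2 x y a b ha hb hab) (h2.2 x y a b ha hb hab) (h2.1 _)
    (mul_nonneg (Real.rpow_nonneg (h1.1 x) _) (Real.rpow_nonneg (h1.1 y) _))

theorem const {c : ℝ} (hc : 0 ≤ c) : LogConvexFun fun _ : Fin k → ℝ => c := by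
  refine ⟨fun _ => hc, fun x y a b ha hb hab => ?_⟩
  rw [← Real.rpow_add_of_nonneg hc ha hb, hab, Real.rpow_one]

theorem comp_affine (hh : LogConvexFun h) (c : ℝ) (d : Fin k → ℝ) :
    LogConvexFun fun x => h (c • x + d) := by
  refine ⟨fun _ => hh.1 _, fun x y a b ha hb hab => ?_⟩
  convert hh.2 (c • x + d) (c • y + d) a b ha hb hab using 2
  obtain rfl : b = 1 - a := by linarith
  ext i
  simp only [Pi.add_apply, Pi.smul_apply, smul_eq_mul]
  ring

/-- Integrating a family of log-convex functions yields a log-convex function. -/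
protected theorem integral {h : (Fin k → ℝ) → (Fin l → ℝ) → ℝ}
    (hh : ∀ w, LogConvexFun fun z => h z w) (hInt : ∀ z, Integrable (h z)) :
    LogConvexFun fun z => ∫ w, h z w := by
  have hnn : ∀ z w, 0 ≤ h z w := fun z w => (hh w).1 z
  refine ⟨fun z => integral_nonneg (hnn z), fun x y a b ha hb hab => ?_⟩
  have hx : ∀ z, ENNReal.ofReal (∫ w, h z w) = ∫⁻ w, ENNReal.ofReal (h z w) := fun z =>
    ofReal_integral_eq_lintegral_ofReal (hInt z) (.of_forall (hnn z))
  have hi : ∀ z, 0 ≤ ∫ w, h z w := fun z => integral_nonneg (hnn z)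
  rw [← ENNReal.ofReal_le_ofReal_iff (mul_nonneg (Real.rpow_nonneg (hi _) _)
    (Real.rpow_nonneg (hi _) _)), ENNReal.ofReal_mul (Real.rpow_nonneg (hi _) _),
    ← ENNReal.ofReal_rpow_of_nonneg (hi _) ha, ← ENNReal.ofReal_rpow_of_nonneg (hi _) hb,
    hx, hx, hx]
  refine le_trans (lintegral_mono fun w => ?_) (ENNReal.lintegral_mul_norm_pow_le
    (hInt x).aemeasurable.ennreal_ofReal (hInt y).aemeasurable.ennreal_ofReal ha hb hab)
  rw [ENNReal.ofReal_rpow_of_nonneg (hnn _ _) ha, ENNReal.ofReal_rpow_of_nonneg (hnn _ _) hb,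
    ← ENNReal.ofReal_mul (Real.rpow_nonneg (hnn _ _) _)]
  exact ENNReal.ofReal_le_ofReal ((hh w).2 x y a b ha hb hab)

protected theorem of_tendsto {h : ℕ → (Fin k → ℝ) → ℝ} {h' : (Fin k → ℝ) → ℝ}
    (hh : ∀ j, LogConvexFun (h j))
    (hlim : ∀ x, Filter.Tendsto (fun j => h j x) Filter.atTop (nhds (h' x))) : LogConvexFun h' :=
  ⟨fun x => ge_of_tendsto' (hlim x) fun j => (hh j).1 x, fun x y a b ha hb hab =>
    le_of_tendsto_of_tendsto' (hlim _) (((hlim x).rpow_const (.inr ha)).mul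
      ((hlim y).rpow_const (.inr hb))) fun j => (hh j).2 x y a b ha hb hab⟩

end LogConvexFun

namespace LogConcaveFun

variable {k l : ℕ} {h h₁ h₂ : (Fin k → ℝ) → ℝ}

protected theorem mul (h1 : LogConcaveFun h₁) (h2 : LogConcaveFun h₂) :
    LogConcaveFun fun x => h₁ x * h₂ x := by
  refine ⟨fun x => mul_nonneg (h1.1 x) (h2.1 x), fun x y a b ha hb hab => ?_⟩
  rw [Real.mul_rpow (h1.1 x) (h2.1 x), Real.mul_rpow (h1.1 y) (h2.1 y), mul_mul_mul_comm]
  exact mul_le_mul (h1.2 x y a b ha hb hab) (h2.2 x y a b ha hb hab)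
    (mul_nonneg (Real.rpow_nonneg (h2.1 x) _) (Real.rpow_nonneg (h2.1 y) _)) (h1.1 _)

theorem const {c : ℝ} (hc : 0 ≤ c) : LogConcaveFun fun _ : Fin k → ℝ => c := by
  refine ⟨fun _ => hc, fun x y a b ha hb hab => ?_⟩
  rw [← Real.rpow_add_of_nonneg hc ha hb, hab, Real.rpow_one]

theorem comp_affine (hh : LogConcaveFun h) (c : ℝ) (d : Fin k → ℝ) :
    LogConcaveFun fun x => h (c • x + d) := by
  refine ⟨fun _ => hh.1 _, fun x y a b ha hb hab => ?_⟩
  convert hh.2 (c • x + d) (c • y + d) a b ha hb hab using 2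
  obtain rfl : b = 1 - a := by linarith
  ext i
  simp only [Pi.add_apply, Pi.smul_apply, smul_eq_mul]
  ring

/-- Marginals of log-concave functions are log-concave. -/
protected theorem integral {h : (Fin k → ℝ) → (Fin l → ℝ) → ℝ} (hnn : ∀ z w, 0 ≤ h z w)
    (hh : ∀ z z' w w' (a b : ℝ), 0 ≤ a → 0 ≤ b → a + b = 1 →
      h z w ^ a * h z' w' ^ b ≤ h (a • z + b • z') (a • w + b • w'))
    (hm : ∀ z, Measurable (h z)) (hInt : ∀ z, Integrable (h z)) :
    LogConcaveFun fun z => ∫ w, h z w := by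
  refine ⟨fun z => integral_nonneg (hnn z), fun x y a b ha hb hab => ?_⟩
  have hx : ∀ z, ENNReal.ofReal (∫ w, h z w) = ∫⁻ w, ENNReal.ofReal (h z w) := fun z =>
    ofReal_integral_eq_lintegral_ofReal (hInt z) (.of_forall (hnn z))
  have hi : ∀ z, 0 ≤ ∫ w, h z w := fun z => integral_nonneg (hnn z)
  rcases ha.eq_or_lt with rfl | ha'
  · obtain rfl : b = 1 := by linarith
    simp
  rcases hb.eq_or_lt with rfl | hb'
  · obtain rfl : a = 1 := by linarith
    simp
  rw [← ENNReal.ofReal_le_ofReal_iff (hi _), ENNReal.ofReal_mul (Real.rpow_nonneg (hi _) _),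
    ← ENNReal.ofReal_rpow_of_nonneg (hi _) ha, ← ENNReal.ofReal_rpow_of_nonneg (hi _) hb,
    hx, hx, hx]
  refine prekopa_leindler (hm _).ennreal_ofReal (hm _).ennreal_ofReal (hm _).ennreal_ofReal
    ha' hb' hab fun w w' => ?_
  rw [ENNReal.ofReal_rpow_of_nonneg (hnn _ _) ha, ENNReal.ofReal_rpow_of_nonneg (hnn _ _) hb,
    ← ENNReal.ofReal_mul (Real.rpow_nonneg (hnn _ _) _)]
  exact ENNReal.ofReal_le_ofReal (hh _ _ _ _ _ _ ha hb hab)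

protected theorem of_tendsto {h : ℕ → (Fin k → ℝ) → ℝ} {h' : (Fin k → ℝ) → ℝ}
    (hh : ∀ j, LogConcaveFun (h j))
    (hlim : ∀ x, Filter.Tendsto (fun j => h j x) Filter.atTop (nhds (h' x))) : LogConcaveFun h' :=
  ⟨fun x => ge_of_tendsto' (hlim x) fun j => (hh j).1 x, fun x y a b ha hb hab =>
    le_of_tendsto_of_tendsto' (((hlim x).rpow_const (.inr ha)).mul
      ((hlim y).rpow_const (.inr hb))) (hlim _) fun j => (hh j).2 x y a b ha hb hab⟩

end LogConcaveFun

theorem logConcaveFun_gaussFn {k : ℕ} {Q : Matrix (Fin k) (Fin k) ℝ} (hQ : Q.PosSemidef) :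
    LogConcaveFun (gaussFn Q) := by
  refine ⟨fun x => (gaussFn_pos Q x).le, fun x y a b ha hb hab => ?_⟩
  simp only [gaussFn, ← Real.exp_mul, ← Real.exp_add]
  refine Real.exp_le_exp.2 ?_
  have h1 := hQ.dotProduct_mulVec_nonneg (x - y)
  rw [star_trivial, dotProduct_comm] at h1
  obtain rfl : b = 1 - a := by linarith
  simp only [mulVec_smul, mulVec_add, mulVec_sub, smul_dotProduct, dotProduct_smul,
    add_dotProduct, dotProduct_add, sub_dotProduct, dotProduct_sub, smul_eq_mul] at h1 ⊢
  nlinarith [mul_nonneg (mul_nonneg ha hb) (mul_nonneg Real.pi_pos.le h1)]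

namespace MoreLogConvex

variable {k : ℕ} {f g : (Fin k → ℝ) → ℝ} {R : Matrix (Fin k) (Fin k) ℝ}

theorem nonneg (hf : MoreLogConvex f R) (x : Fin k → ℝ) : 0 ≤ f x := by
  obtain ⟨h, hh, rfl⟩ := hf
  exact mul_nonneg (gaussFn_pos _ _).le (hh.1 x)

protected theorem continuous (hf : MoreLogConvex f R) : Continuous f := by
  obtain ⟨h, hh, rfl⟩ := hf
  exact (continuous_gaussFn R).mul hh.continuous

theorem mul_gaussFn_le (hf : MoreLogConvex f R) (x w : Fin k → ℝ) :
    f x * gaussFn R w ≤ (f (x + w) + f (x - w)) / 2 := by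
  have hnn := hf.nonneg
  have key : (f x * gaussFn R w) ^ 2 ≤ f (x + w) * f (x - w) := by
    obtain ⟨h, hh, rfl⟩ := hf
    have e : gaussFn R (x + w) * gaussFn R (x - w) = (gaussFn R x * gaussFn R w) ^ 2 := by
      simp only [gaussFn, ← Real.exp_add, ← Real.exp_nat_mul]
      congr 1
      simp only [mulVec_add, mulVec_sub, add_dotProduct, dotProduct_add, sub_dotProduct,
        dotProduct_sub]
      push_cast
      ring
    calc (gaussFn R x * h x * gaussFn R w) ^ 2
        = (gaussFn R x * gaussFn R w) ^ 2 * h x ^ 2 := by ring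
      _ ≤ (gaussFn R x * gaussFn R w) ^ 2 * (h (x + w) * h (x - w)) := by
          gcongr; exact hh.sq_le x w
      _ = _ := by rw [← e]; ring
  refine le_of_sq_le_sq (key.trans ?_) (by linarith [hnn (x + w), hnn (x - w)])
  nlinarith [sq_nonneg (f (x + w) - f (x - w))]

/-- Integrable functions that are more log-convex than a Gaussian are bounded. -/
theorem le_mul_integral (hR : R.PosDef) (hf : MoreLogConvex f R) (hfi : Integrable f)
    (x : Fin k → ℝ) : f x ≤ √R.det * ∫ y, f y := by
  have h1 : ∫ w, f x * gaussFn R w ≤ ∫ w, (f (x + w) + f (x - w)) / 2 :=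
    integral_mono ((integrable_gaussFn hR).const_mul _)
      (((hfi.comp_add_left x).add (hfi.comp_sub_left x)).div_const 2) (hf.mul_gaussFn_le x)
  rw [integral_const_mul, integral_gaussFn hR, integral_div,
    integral_add (hfi.comp_add_left x) (hfi.comp_sub_left x), integral_add_left_eq_self,
    integral_sub_left_eq_self, add_self_div_two] at h1
  have hd : 0 < √R.det := Real.sqrt_pos.2 hR.det_pos
  rw [← div_eq_mul_inv, div_le_iff₀ hd] at h1
  linarith

end MoreLogConvex

/-- The rotation by `π / 4` composed with a reflection, `(u, v) ↦ ((u + v) / √2, (u - v) / √2)`. -/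
def rotLin (k : ℕ) : ((Fin k → ℝ) × (Fin k → ℝ)) →ₗ[ℝ] ((Fin k → ℝ) × (Fin k → ℝ)) :=
  LinearMap.prod ((√2)⁻¹ • (LinearMap.fst ℝ _ _ + LinearMap.snd ℝ _ _))
    ((√2)⁻¹ • (LinearMap.fst ℝ _ _ - LinearMap.snd ℝ _ _))

theorem rotLin_apply (k : ℕ) (p : (Fin k → ℝ) × (Fin k → ℝ)) :
    rotLin k p = ((√2)⁻¹ • (p.1 + p.2), (√2)⁻¹ • (p.1 - p.2)) := rfl

theorem inv_sqrt_two_mul_self : (√2)⁻¹ * (√2)⁻¹ = (2⁻¹ : ℝ) := by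
  rw [← mul_inv, Real.mul_self_sqrt (by norm_num)]

theorem rotLin_involutive (k : ℕ) : Function.Involutive (rotLin k) := by
  intro p
  have h := inv_sqrt_two_mul_self
  ext i <;> simp only [rotLin_apply, Pi.add_apply, Pi.sub_apply, Pi.smul_apply, smul_eq_mul]
  · linear_combination 2 * p.1 i * h
  · linear_combination 2 * p.2 i * h

/-- `rotLin` as a measurable equivalence. -/
def rotEquiv (k : ℕ) : ((Fin k → ℝ) × (Fin k → ℝ)) ≃ᵐ ((Fin k → ℝ) × (Fin k → ℝ)) :=
  MeasurableEquiv.ofInvolutive (rotLin k) (rotLin_involutive k)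
    (rotLin k).continuous_of_finiteDimensional.measurable

theorem rotEquiv_apply (k : ℕ) (p : (Fin k → ℝ) × (Fin k → ℝ)) :
    rotEquiv k p = ((√2)⁻¹ • (p.1 + p.2), (√2)⁻¹ • (p.1 - p.2)) := rfl

theorem rotEquiv_rotEquiv (k : ℕ) (p : (Fin k → ℝ) × (Fin k → ℝ)) :
    rotEquiv k (rotEquiv k p) = p := rotLin_involutive k p

theorem measurePreserving_rotEquiv (k : ℕ) : MeasurePreserving (rotEquiv k) := by
  refine ⟨(rotEquiv k).measurable, ?_⟩
  have h1 : rotLin k * rotLin k = 1 := LinearMap.ext (rotLin_involutive k)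
  have h2 : LinearMap.det (rotLin k) * LinearMap.det (rotLin k) = 1 := by
    rw [← map_mul, h1, map_one]
  have h3 : |(LinearMap.det (rotLin k))⁻¹| = 1 := by
    rw [abs_inv, inv_eq_one, ← abs_one, abs_eq_abs]
    exact mul_self_eq_one_iff.1 h2
  have : (volume : Measure ((Fin k → ℝ) × (Fin k → ℝ))).IsAddHaarMeasure :=
    Measure.prod.instIsAddHaarMeasure _ _
  have h4 := Measure.map_linearMap_addHaar_eq_smul_addHaar
    (volume : Measure ((Fin k → ℝ) × (Fin k → ℝ))) (f := rotLin k)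
    (fun h => by rw [h] at h2; simp at h2)
  rw [h3] at h4
  simpa using! h4

section Circ

variable {k : ℕ} {f g : (Fin k → ℝ) → ℝ} {R Q : Matrix (Fin k) (Fin k) ℝ} {b : Prop}

/-- `circ f g` is the density of `(X + Y) / √2` for independent `X`, `Y` with densities `f`, `g`. -/
def circ (f g : (Fin k → ℝ) → ℝ) (z : Fin k → ℝ) : ℝ :=
  ∫ w, f ((√2)⁻¹ • (z + w)) * g ((√2)⁻¹ • (z - w))

/-- Integrable functions that are more log-convex than `g_R` and, if `b` holds, more log-concave
than `g_Q`. -/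
structure Sandwiched (R Q : Matrix (Fin k) (Fin k) ℝ) (b : Prop) (f : (Fin k → ℝ) → ℝ) : Prop where
  convex : MoreLogConvex f R
  concave : b → MoreLogConcave f Q
  integrable : Integrable f

theorem LogConvexFun.comp_neg {h : (Fin k → ℝ) → ℝ} (hh : LogConvexFun h) :
    LogConvexFun fun x => h (-x) := by
  simpa using hh.comp_affine (-1) 0

theorem LogConcaveFun.comp_neg {h : (Fin k → ℝ) → ℝ} (hh : LogConcaveFun h) :
    LogConcaveFun fun x => h (-x) := by
  simpa using hh.comp_affine (-1) 0

namespace Sandwiched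

theorem nonneg (hf : Sandwiched R Q b f) (x : Fin k → ℝ) : 0 ≤ f x := hf.convex.nonneg x

protected theorem continuous (hf : Sandwiched R Q b f) : Continuous f := hf.convex.continuous

theorem integral_nonneg (hf : Sandwiched R Q b f) : 0 ≤ ∫ x, f x :=
  MeasureTheory.integral_nonneg hf.nonneg

theorem comp_neg (hf : Sandwiched R Q b f) : Sandwiched R Q b fun x => f (-x) where
  convex := by
    obtain ⟨h, hh, rfl⟩ := hf.convex
    exact ⟨_, hh.comp_neg, by simp [gaussFn_neg]⟩
  concave hb := by
    obtain ⟨h, hh, rfl⟩ := hf.concave hb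
    exact ⟨_, hh.comp_neg, by simp [gaussFn_neg]⟩
  integrable := hf.integrable.comp_neg

theorem const_mul (hf : Sandwiched R Q b f) {c : ℝ} (hc : 0 ≤ c) :
    Sandwiched R Q b fun x => c * f x where
  convex := by
    obtain ⟨h, hh, rfl⟩ := hf.convex
    exact ⟨_, (LogConvexFun.const hc).mul hh, by ext; ring⟩
  concave hb := by
    obtain ⟨h, hh, rfl⟩ := hf.concave hb
    exact ⟨_, (LogConcaveFun.const hc).mul hh, by ext; ring⟩
  integrable := hf.integrable.const_mul c

theorem le_mul_integral (hR : R.PosDef) (hf : Sandwiched R Q b f) (x : Fin k → ℝ) :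
    f x ≤ √R.det * ∫ y, f y :=
  hf.convex.le_mul_integral hR hf.integrable x

theorem integrable_slice (hR : R.PosDef) (hf : Sandwiched R Q b f) (hg : Sandwiched R Q b g)
    (z : Fin k → ℝ) : Integrable fun w => f ((√2)⁻¹ • (z + w)) * g ((√2)⁻¹ • (z - w)) := by
  have h2 : (√2)⁻¹ ≠ (0 : ℝ) := by positivity
  refine Integrable.bdd_mul (c := √R.det * ∫ y, f y) ?_ ?_ (.of_forall fun w => ?_)
  · exact (hg.integrable.comp_smul h2).comp_sub_left z
  · exact (hf.continuous.comp (by fun_prop)).aestronglyMeasurable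
  · rw [Real.norm_of_nonneg (hf.nonneg _)]
    exact hf.le_mul_integral hR _

/-- Conditional densities of rotated product densities stay in the class. -/
theorem slice (hR : R.PosDef) (hf : Sandwiched R Q b f) (hg : Sandwiched R Q b g)
    (z : Fin k → ℝ) :
    Sandwiched R Q b fun w => f ((√2)⁻¹ • (z + w)) * g ((√2)⁻¹ • (z - w)) where
  convex := by
    obtain ⟨h₁, hh₁, rfl⟩ := hf.convex
    obtain ⟨h₂, hh₂, rfl⟩ := hg.convex
    refine ⟨_, (LogConvexFun.const (gaussFn_pos R z).le).mul ((hh₁.comp_affine (√2)⁻¹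
      ((√2)⁻¹ • z)).mul (hh₂.comp_affine (-(√2)⁻¹) ((√2)⁻¹ • z))), funext fun w => ?_⟩
    rw [mul_mul_mul_comm, gaussFn_rotate, smul_add, smul_sub, neg_smul, neg_add_eq_sub,
      add_comm ((√2)⁻¹ • z)]
    ring
  concave hb := by
    obtain ⟨h₁, hh₁, rfl⟩ := hf.concave hb
    obtain ⟨h₂, hh₂, rfl⟩ := hg.concave hb
    refine ⟨_, (LogConcaveFun.const (gaussFn_pos Q z).le).mul ((hh₁.comp_affine (√2)⁻¹
      ((√2)⁻¹ • z)).mul (hh₂.comp_affine (-(√2)⁻¹) ((√2)⁻¹ • z))), funext fun w => ?_⟩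
    rw [mul_mul_mul_comm, gaussFn_rotate, smul_add, smul_sub, neg_smul, neg_add_eq_sub,
      add_comm ((√2)⁻¹ • z)]
    ring
  integrable := integrable_slice hR hf hg z

theorem integrable_rot (hf : Sandwiched R Q b f) (hg : Sandwiched R Q b g) :
    Integrable fun q : (Fin k → ℝ) × (Fin k → ℝ) =>
      f ((√2)⁻¹ • (q.1 + q.2)) * g ((√2)⁻¹ • (q.1 - q.2)) :=
  (measurePreserving_rotEquiv k).integrable_comp_of_integrable
    (hf.integrable.mul_prod hg.integrable)

protected theorem circ (hR : R.PosDef) (hQ : Q.PosDef) (hf : Sandwiched R Q b f)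
    (hg : Sandwiched R Q b g) : Sandwiched R Q b (circ f g) where
  convex := by
    have hs := integrable_slice hR hf hg
    obtain ⟨h₁, hh₁, rfl⟩ := hf.convex
    obtain ⟨h₂, hh₂, rfl⟩ := hg.convex
    have key : ∀ z w, gaussFn R ((√2)⁻¹ • (z + w)) * h₁ ((√2)⁻¹ • (z + w)) *
        (gaussFn R ((√2)⁻¹ • (z - w)) * h₂ ((√2)⁻¹ • (z - w))) =
        gaussFn R z * (gaussFn R w * (h₁ ((√2)⁻¹ • (z + w)) * h₂ ((√2)⁻¹ • (z - w)))) := by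
      intro z w
      rw [mul_mul_mul_comm, gaussFn_rotate, mul_assoc]
    simp only [key] at hs
    refine ⟨_, LogConvexFun.integral (h := fun z w => gaussFn R w *
      (h₁ ((√2)⁻¹ • (z + w)) * h₂ ((√2)⁻¹ • (z - w)))) (fun w => ?_) (fun z => ?_), ?_⟩
    · have := (LogConvexFun.const (gaussFn_pos R w).le).mul ((hh₁.comp_affine (√2)⁻¹
        ((√2)⁻¹ • w)).mul (hh₂.comp_affine (√2)⁻¹ (-((√2)⁻¹ • w))))
      simpa only [smul_add, smul_sub, sub_eq_add_neg, smul_neg] using this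
    · exact (integrable_const_mul_iff (gaussFn_pos R z).ne'.isUnit _).1 (hs z)
    · funext z
      simp only [circ, key, integral_const_mul]
  concave hb := by
    have hs := integrable_slice hR hf hg
    have hfc := hf.continuous
    have hgc := hg.continuous
    obtain ⟨h₁, hh₁, hf₁⟩ := hf.concave hb
    obtain ⟨h₂, hh₂, hg₂⟩ := hg.concave hb
    have key : ∀ z w, f ((√2)⁻¹ • (z + w)) * g ((√2)⁻¹ • (z - w)) =
        gaussFn Q z * (gaussFn Q w * (h₁ ((√2)⁻¹ • (z + w)) * h₂ ((√2)⁻¹ • (z - w)))) := by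
      intro z w
      rw [hf₁, hg₂, mul_mul_mul_comm, gaussFn_rotate, mul_assoc]
    have hc₁ : Continuous h₁ := by
      have : h₁ = fun x => f x / gaussFn Q x := by
        funext x; rw [hf₁, mul_div_cancel_left₀ _ (gaussFn_pos Q x).ne']
      rw [this]
      exact hfc.div (continuous_gaussFn Q) fun x => (gaussFn_pos Q x).ne'
    have hc₂ : Continuous h₂ := by
      have : h₂ = fun x => g x / gaussFn Q x := by
        funext x; rw [hg₂, mul_div_cancel_left₀ _ (gaussFn_pos Q x).ne']
      rw [this]
      exact hgc.div (continuous_gaussFn Q) fun x => (gaussFn_pos Q x).ne'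
    simp only [key] at hs
    refine ⟨_, LogConcaveFun.integral (h := fun z w => gaussFn Q w *
      (h₁ ((√2)⁻¹ • (z + w)) * h₂ ((√2)⁻¹ • (z - w))))
      (fun z w => mul_nonneg (gaussFn_pos Q w).le (mul_nonneg (hh₁.1 _) (hh₂.1 _)))
      (fun z z' w w' a c ha hc hac => ?_) (fun z => ?_) (fun z => ?_), ?_⟩
    · have e₁ : (√2)⁻¹ • (a • z + c • z' + (a • w + c • w')) =
        a • ((√2)⁻¹ • (z + w)) + c • ((√2)⁻¹ • (z' + w')) := by module
      have e₂ : (√2)⁻¹ • (a • z + c • z' - (a • w + c • w')) =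
        a • ((√2)⁻¹ • (z - w)) + c • ((√2)⁻¹ • (z' - w')) := by module
      rw [e₁, e₂]
      have hG := (logConcaveFun_gaussFn hQ.posSemidef)
      rw [Real.mul_rpow (gaussFn_pos _ _).le (mul_nonneg (hh₁.1 _) (hh₂.1 _)),
        Real.mul_rpow (gaussFn_pos _ _).le (mul_nonneg (hh₁.1 _) (hh₂.1 _)),
        Real.mul_rpow (hh₁.1 _) (hh₂.1 _), Real.mul_rpow (hh₁.1 _) (hh₂.1 _),
        mul_mul_mul_comm, mul_mul_mul_comm (h₁ _ ^ _)]
      have p₁ := fun x t => Real.rpow_nonneg (hh₁.1 x) t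
      have p₂ := fun x t => Real.rpow_nonneg (hh₂.1 x) t
      refine mul_le_mul (hG.2 _ _ _ _ ha hc hac) (mul_le_mul (hh₁.2 _ _ _ _ ha hc hac)
        (hh₂.2 _ _ _ _ ha hc hac) (mul_nonneg (p₂ _ _) (p₂ _ _)) (hh₁.1 _))
        (mul_nonneg (mul_nonneg (p₁ _ _) (p₁ _ _)) (mul_nonneg (p₂ _ _) (p₂ _ _))) (hG.1 _)
    · exact Continuous.measurable (by fun_prop)
    · exact (integrable_const_mul_iff (gaussFn_pos Q z).ne'.isUnit _).1 (hs z)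
    · funext z
      simp only [circ, key, integral_const_mul]
  integrable := (integrable_rot hf hg).integral_prod_left

/-- Integrals of functions against `circ f g`. -/
theorem integral_circ_mul (hf : Sandwiched R Q b f) (hg : Sandwiched R Q b g)
    {Φ : (Fin k → ℝ) → ℂ} (hΦ : Continuous Φ) (hb : ∀ x, ‖Φ x‖ ≤ 1) :
    ∫ z, (circ f g z : ℂ) * Φ z = ∫ x, ∫ y, ((f x : ℂ) * g y) * Φ ((√2)⁻¹ • (x + y)) := by
  have hp : Integrable fun q : (Fin k → ℝ) × (Fin k → ℝ) =>
      ((f q.1 : ℂ) * g q.2) * Φ ((√2)⁻¹ • (q.1 + q.2)) := by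
    have h1 := (hf.integrable.ofReal (𝕜 := ℂ)).mul_prod (hg.integrable.ofReal (𝕜 := ℂ))
    exact h1.mul_bdd (c := 1) (hΦ.comp (by fun_prop)).aestronglyMeasurable (.of_forall fun x => hb _)
  have hp' := (measurePreserving_rotEquiv k).integrable_comp_of_integrable hp
  have e : ∀ q : (Fin k → ℝ) × (Fin k → ℝ), (√2)⁻¹ • ((rotEquiv k q).1 + (rotEquiv k q).2) = q.1 :=
    fun q => congrArg Prod.fst (rotEquiv_rotEquiv k q)
  rw [← integral_prod _ hp, ← Measure.volume_eq_prod,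
    ← (measurePreserving_rotEquiv k).integral_comp', Measure.volume_eq_prod]
  refine Eq.trans ?_ (integral_prod _ hp').symm
  refine integral_congr_ae (.of_forall fun z => ?_)
  simp only [Function.comp_apply, e]
  rw [integral_mul_const, circ, ← integral_complex_ofReal]
  simp [rotEquiv_apply]

theorem integral_circ (hf : Sandwiched R Q b f) (hg : Sandwiched R Q b g) :
    ∫ z, circ f g z = (∫ x, f x) * ∫ x, g x := by
  have := integral_circ_mul hf hg (Φ := fun _ => 1) continuous_const (by simp)
  simp only [mul_one, integral_const_mul, integral_mul_const, integral_complex_ofReal] at this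
  exact_mod_cast this

end Sandwiched

end Circ

section BrascampLieb

variable {n m : ℕ} {ni : Fin m → ℕ} {C : ∀ i, Matrix (Fin (ni i)) (Fin n) ℝ} {p : Fin m → ℝ}
  {𝒬 : Matrix (Fin n) (Fin n) ℝ} {R Q : ∀ i, Matrix (Fin (ni i)) (Fin (ni i)) ℝ} {b : Fin m → Prop}
  {f g : ∀ i, (Fin (ni i) → ℝ) → ℝ}

/-- The integrand of the Brascamp–Lieb functional with Gaussian kernel. -/
def blIntegrand (C : ∀ i, Matrix (Fin (ni i)) (Fin n) ℝ) (p : Fin m → ℝ)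
    (𝒬 : Matrix (Fin n) (Fin n) ℝ) (f : ∀ i, (Fin (ni i) → ℝ) → ℝ) (x : Fin n → ℝ) : ℝ :=
  gaussFn 𝒬 x * ∏ i, f i ((C i).mulVec x) ^ p i

/-- The Brascamp–Lieb functional with Gaussian kernel. -/
def blIntegral (C : ∀ i, Matrix (Fin (ni i)) (Fin n) ℝ) (p : Fin m → ℝ)
    (𝒬 : Matrix (Fin n) (Fin n) ℝ) (f : ∀ i, (Fin (ni i) → ℝ) → ℝ) : ℝ≥0∞ :=
  ∫⁻ x, ENNReal.ofReal (blIntegrand C p 𝒬 f x)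

/-- Tuples of functions from the class `Sandwiched` with unit mass. -/
def Normalized (R Q : ∀ i, Matrix (Fin (ni i)) (Fin (ni i)) ℝ) (b : Fin m → Prop)
    (f : ∀ i, (Fin (ni i) → ℝ) → ℝ) : Prop :=
  ∀ i, Sandwiched (R i) (Q i) (b i) (f i) ∧ ∫ x, f i x = 1

/-- The best constant over the class `Sandwiched`. -/
def blSup (C : ∀ i, Matrix (Fin (ni i)) (Fin n) ℝ) (p : Fin m → ℝ)
    (𝒬 : Matrix (Fin n) (Fin n) ℝ) (R Q : ∀ i, Matrix (Fin (ni i)) (Fin (ni i)) ℝ)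
    (b : Fin m → Prop) : ℝ≥0∞ :=
  ⨆ (f : ∀ i, (Fin (ni i) → ℝ) → ℝ) (_ : Normalized R Q b f), blIntegral C p 𝒬 f

theorem Normalized.blIntegral_le_blSup (hf : Normalized R Q b f) :
    blIntegral C p 𝒬 f ≤ blSup C p 𝒬 R Q b := le_iSup₂_of_le f hf le_rfl

theorem blIntegrand_nonneg (hf : ∀ i x, 0 ≤ f i x) (x : Fin n → ℝ) :
    0 ≤ blIntegrand C p 𝒬 f x :=
  mul_nonneg (gaussFn_pos _ _).le (Finset.prod_nonneg fun i _ => Real.rpow_nonneg (hf i _) _)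

theorem continuous_blIntegrand (hp : ∀ i, 0 < p i) (hf : ∀ i, Continuous (f i)) :
    Continuous (blIntegrand C p 𝒬 f) := by
  unfold blIntegrand
  refine (continuous_gaussFn 𝒬).mul (continuous_finsetProd _ fun i _ => ?_)
  exact ((hf i).comp (by fun_prop)).rpow_const fun _ => .inr (hp i).le

theorem Normalized.blIntegrand_le (hp : ∀ i, 0 < p i) (hR : ∀ i, (R i).PosDef)
    (hf : Normalized R Q b f) (x : Fin n → ℝ) :
    blIntegrand C p 𝒬 f x ≤ gaussFn 𝒬 x * ∏ i, √(R i).det ^ p i := by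
  refine mul_le_mul_of_nonneg_left ?_ (gaussFn_pos _ _).le
  refine Finset.prod_le_prod (fun i _ => Real.rpow_nonneg ((hf i).1.nonneg _) _) fun i _ => ?_
  refine Real.rpow_le_rpow ((hf i).1.nonneg _) ?_ (hp i).le
  simpa [(hf i).2] using (hf i).1.le_mul_integral (hR i) ((C i).mulVec x)

theorem blSup_lt_top (hp : ∀ i, 0 < p i) (h𝒬 : 𝒬.PosDef) (hR : ∀ i, (R i).PosDef) :
    blSup C p 𝒬 R Q b < ∞ := by
  have hi := ((integrable_gaussFn h𝒬).mul_const (∏ i, √(R i).det ^ p i)).lintegral_lt_top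
  refine lt_of_le_of_lt (iSup₂_le fun f hf => ?_) hi
  exact lintegral_mono fun x => ENNReal.ofReal_le_ofReal (hf.blIntegrand_le hp hR x)

theorem blIntegral_const_mul {c : Fin m → ℝ} (hc : ∀ i, 0 ≤ c i) (hp : ∀ i, 0 < p i)
    (hf : ∀ i x, 0 ≤ f i x) :
    blIntegral C p 𝒬 (fun i x => c i * f i x) =
      blIntegral C p 𝒬 f * ∏ i, ENNReal.ofReal (c i) ^ p i := by
  have h1 : ∏ i, ENNReal.ofReal (c i) ^ p i = ENNReal.ofReal (∏ i, c i ^ p i) := by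
    rw [ENNReal.ofReal_prod_of_nonneg fun i _ => Real.rpow_nonneg (hc i) _]
    exact Finset.prod_congr rfl fun i _ => ENNReal.ofReal_rpow_of_nonneg (hc i) (hp i).le
  rw [h1, blIntegral, blIntegral, ← lintegral_mul_const' _ _ ENNReal.ofReal_ne_top]
  refine lintegral_congr fun x => ?_
  rw [← ENNReal.ofReal_mul (blIntegrand_nonneg hf x)]
  congr 1
  simp only [blIntegrand]
  rw [Finset.prod_congr rfl fun i _ => Real.mul_rpow (hc i) (hf i _), Finset.prod_mul_distrib]
  ring

theorem blIntegral_le_blSup_mul (hp : ∀ i, 0 < p i) (hR : ∀ i, (R i).PosDef)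
    (hf : ∀ i, Sandwiched (R i) (Q i) (b i) (f i)) :
    blIntegral C p 𝒬 f ≤ blSup C p 𝒬 R Q b * ∏ i, ENNReal.ofReal (∫ x, f i x) ^ p i := by
  by_cases h0 : ∃ i, ∫ x, f i x = 0
  · obtain ⟨i, hi⟩ := h0
    have hz : ∀ x, f i x = 0 := fun x =>
      le_antisymm (by simpa [hi] using (hf i).le_mul_integral (hR i) x) ((hf i).nonneg x)
    refine le_of_eq_of_le ?_ zero_le
    have : ∀ x, blIntegrand C p 𝒬 f x = 0 := fun x => by
      rw [blIntegrand, Finset.prod_eq_zero (Finset.mem_univ i), mul_zero]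
      rw [hz, Real.zero_rpow (hp i).ne']
    simp [blIntegral, this]
  · push Not at h0
    have hpos : ∀ i, 0 < ∫ x, f i x := fun i => lt_of_le_of_ne (hf i).integral_nonneg (h0 i).symm
    set g : ∀ i, (Fin (ni i) → ℝ) → ℝ := fun i x => (∫ x, f i x)⁻¹ * f i x with hg
    have hfg : f = fun i x => (∫ x, f i x) * g i x := by
      funext i x
      rw [hg]
      field_simp [h0 i]
    have hgN : Normalized R Q b g := fun i =>
      ⟨(hf i).const_mul (inv_nonneg.2 (hpos i).le), by
        simp only [hg, integral_const_mul, inv_mul_cancel₀ (h0 i)]⟩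
    have h1 := blIntegral_const_mul (C := C) (𝒬 := 𝒬) (c := fun i => ∫ x, f i x)
      (fun i => (hpos i).le) hp (fun i x => (hgN i).1.nonneg x)
    rw [← hfg] at h1
    rw [h1]
    gcongr
    exact hgN.blIntegral_le_blSup

/-- Ball's inequality. -/
theorem blIntegral_mul_le (hp : ∀ i, 0 < p i) (h𝒬 : 𝒬.PosDef) (hR : ∀ i, (R i).PosDef)
    (hf : ∀ i, Sandwiched (R i) (Q i) (b i) (f i)) (hg : ∀ i, Sandwiched (R i) (Q i) (b i) (g i)) :
    blIntegral C p 𝒬 f * blIntegral C p 𝒬 g ≤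
      blSup C p 𝒬 R Q b * blIntegral C p 𝒬 fun i => circ (f i) (g i) := by
  have hfc := continuous_blIntegrand (C := C) (𝒬 := 𝒬) hp fun i => (hf i).continuous
  have hgc := continuous_blIntegrand (C := C) (𝒬 := 𝒬) hp fun i => (hg i).continuous
  have hfn := blIntegrand_nonneg (C := C) (p := p) (𝒬 := 𝒬) fun i x => (hf i).nonneg x
  have hgn := blIntegrand_nonneg (C := C) (p := p) (𝒬 := 𝒬) fun i x => (hg i).nonneg x
  have hmeas : Measurable fun q : (Fin n → ℝ) × (Fin n → ℝ) =>
      ENNReal.ofReal (blIntegrand C p 𝒬 f q.1) * ENNReal.ofReal (blIntegrand C p 𝒬 g q.2) := by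
    have h1 := hfc.measurable
    have h2 := hgc.measurable
    fun_prop
  have e1 : blIntegral C p 𝒬 f * blIntegral C p 𝒬 g =
      ∫⁻ u : Fin n → ℝ, ∫⁻ v : Fin n → ℝ,
        ENNReal.ofReal (blIntegrand C p 𝒬 f ((√2)⁻¹ • (u + v))) *
          ENNReal.ofReal (blIntegrand C p 𝒬 g ((√2)⁻¹ • (u - v))) := by
    rw [blIntegral, blIntegral, ← lintegral_prod_mul hfc.measurable.ennreal_ofReal.aemeasurable
      hgc.measurable.ennreal_ofReal.aemeasurable, ← Measure.volume_eq_prod,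
      ← (measurePreserving_rotEquiv n).lintegral_comp hmeas, Measure.volume_eq_prod]
    exact lintegral_prod _ (hmeas.comp (rotEquiv n).measurable).aemeasurable
  rw [e1, blIntegral, ← lintegral_const_mul' _ _ (blSup_lt_top hp h𝒬 hR).ne]
  refine lintegral_mono fun u => ?_
  have hs := fun i => Sandwiched.slice (hR i) (hf i) (hg i) ((C i).mulVec u)
  have e2 : ∀ v, ENNReal.ofReal (blIntegrand C p 𝒬 f ((√2)⁻¹ • (u + v))) *
      ENNReal.ofReal (blIntegrand C p 𝒬 g ((√2)⁻¹ • (u - v))) = ENNReal.ofReal (gaussFn 𝒬 u) *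
      ENNReal.ofReal (blIntegrand C p 𝒬 (fun i w => f i ((√2)⁻¹ • ((C i).mulVec u + w)) *
        g i ((√2)⁻¹ • ((C i).mulVec u - w))) v) := by
    intro v
    rw [← ENNReal.ofReal_mul (hfn _), ← ENNReal.ofReal_mul (gaussFn_pos _ _).le]
    congr 1
    simp only [blIntegrand]
    rw [mul_mul_mul_comm, gaussFn_rotate, ← Finset.prod_mul_distrib, mul_assoc]
    congr 2
    refine Finset.prod_congr rfl fun i _ => ?_
    rw [← Real.mul_rpow ((hf i).nonneg _) ((hg i).nonneg _)]
    simp only [mulVec_smul, mulVec_add, mulVec_sub]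
  simp only [e2]
  rw [lintegral_const_mul' _ _ ENNReal.ofReal_ne_top]
  have h3 := blIntegral_le_blSup_mul (C := C) (𝒬 := 𝒬) hp hR hs
  refine (mul_le_mul_right h3 _).trans_eq ?_
  rw [mul_left_comm]
  congr 1
  have hcn : ∀ i z, 0 ≤ circ (f i) (g i) z := fun i z =>
    integral_nonneg fun w => mul_nonneg ((hf i).nonneg _) ((hg i).nonneg _)
  rw [blIntegrand, ENNReal.ofReal_mul (gaussFn_pos _ _).le,
    ENNReal.ofReal_prod_of_nonneg fun i _ => Real.rpow_nonneg (hcn i _) _]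
  congr 1
  exact Finset.prod_congr rfl fun i _ => ENNReal.ofReal_rpow_of_nonneg (hcn i _) (hp i).le

end BrascampLieb

open Filter Topology in
/-- A diagonal extraction: a sequence of pointwise bounded real families indexed by a countable
type has a pointwise convergent subsequence. -/
theorem exists_strictMono_tendsto_of_bounded {ι : Type*} [Countable ι] {u : ℕ → ι → ℝ} {M : ι → ℝ}
    (h0 : ∀ k i, 0 ≤ u k i) (hM : ∀ k i, u k i ≤ M i) :
    ∃ (l : ι → ℝ) (φ : ℕ → ℕ), StrictMono φ ∧ ∀ i, Tendsto (fun j => u (φ j) i) atTop (𝓝 (l i)) := by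
  have hc : IsCompact (Set.univ.pi fun i => Set.Icc 0 (M i)) :=
    isCompact_univ_pi fun i => isCompact_Icc
  obtain ⟨l, -, φ, hφ, hl⟩ := hc.tendsto_subseq (x := u) fun k i _ => ⟨h0 k i, hM k i⟩
  exact ⟨l, φ, hφ, fun i => (tendsto_pi_nhds.1 hl) i⟩

open Filter Topology in
/-- Locally uniformly bounded convex functions converging on a dense sequence converge. -/
theorem ConvexOn.exists_tendsto_of_dense {d : ℕ} {h : ℕ → (Fin d → ℝ) → ℝ} {M : (Fin d → ℝ) → ℝ}
    (hh : ∀ k, ConvexOn ℝ Set.univ (h k)) (h0 : ∀ k x, 0 ≤ h k x) (hM : ∀ k x, h k x ≤ M x)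
    (hMc : Continuous M) {l : ℕ → ℝ}
    (hl : ∀ j, Tendsto (fun k => h k (TopologicalSpace.denseSeq (Fin d → ℝ) j)) atTop (𝓝 (l j)))
    (x : Fin d → ℝ) : ∃ y, Tendsto (fun k => h k x) atTop (𝓝 y) := by
  obtain ⟨A, hA⟩ := (isCompact_closedBall x (1 + 1)).bddAbove_image hMc.continuousOn
  have hA' : ∀ k, ∀ a, dist a x < 1 + 1 → |h k a| ≤ A := fun k a ha => by
    rw [abs_of_nonneg (h0 k a)]
    exact (hM k a).trans (hA ⟨a, ha.le, rfl⟩)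
  have hL : ∀ k, LipschitzOnWith (2 * A / 1).toNNReal (h k) (Metric.ball x (1 + 1 - 1)) := fun k =>
    ((hh k).subset (Set.subset_univ _) (convex_ball x (1 + 1))).lipschitzOnWith_of_abs_le
      (by norm_num) (hA' k)
  set L := (2 * A / 1).toNNReal
  refine cauchySeq_tendsto_of_complete (Metric.cauchySeq_iff'.2 fun ε hε => ?_)
  have hδ : 0 < min 1 (ε / (4 * (L + 1))) := by positivity
  obtain ⟨j, hj⟩ := (TopologicalSpace.denseRange_denseSeq (Fin d → ℝ)).exists_dist_lt x hδ
  set q := TopologicalSpace.denseSeq (Fin d → ℝ) j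
  obtain ⟨N, hN⟩ := Metric.cauchySeq_iff'.1 (hl j).cauchySeq (ε / 2) (by positivity)
  refine ⟨N, fun k hk => ?_⟩
  have hd : ∀ k, dist (h k x) (h k q) < ε / 4 := fun k => by
    have h1 := (hL k).dist_le_mul x (by simp) q
      (by rw [Metric.mem_ball, dist_comm]; exact (hj.trans_le (min_le_left _ _)).trans_eq (by norm_num))
    refine h1.trans_lt ?_
    have h2 : dist x q < ε / (4 * (L + 1)) := hj.trans_le (min_le_right _ _)
    rw [lt_div_iff₀ (by positivity)] at h2
    nlinarith [dist_nonneg (x := x) (y := q), L.2]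
  have h3 := hN k hk
  have h4 := dist_triangle4 (h k x) (h k q) (h N q) (h N x)
  have h5 := hd N
  rw [dist_comm] at h5
  linarith [hd k]

section BrascampLieb

open Filter Topology

variable {n m : ℕ} {ni : Fin m → ℕ} {C : ∀ i, Matrix (Fin (ni i)) (Fin n) ℝ} {p : Fin m → ℝ}
  {𝒬 : Matrix (Fin n) (Fin n) ℝ} {R Q : ∀ i, Matrix (Fin (ni i)) (Fin (ni i)) ℝ} {b : Fin m → Prop}
  {f g : ∀ i, (Fin (ni i) → ℝ) → ℝ}

theorem Sandwiched.of_tendsto {d : ℕ} {R Q : Matrix (Fin d) (Fin d) ℝ} {b : Prop}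
    {F : ℕ → (Fin d → ℝ) → ℝ} {f : (Fin d → ℝ) → ℝ} (hF : ∀ k, Sandwiched R Q b (F k))
    (hInt : ∀ k, ∫ x, F k x = 1) (hlim : ∀ x, Tendsto (fun k => F k x) atTop (𝓝 (f x))) :
    Sandwiched R Q b f ∧ ∫ x, f x ≤ 1 := by
  have hnn : ∀ x, 0 ≤ f x := fun x => ge_of_tendsto' (hlim x) fun k => (hF k).nonneg x
  have hconv : MoreLogConvex f R := by
    choose h hh hFh using fun k => (hF k).convex
    refine ⟨fun x => f x / gaussFn R x, LogConvexFun.of_tendsto hh fun x => ?_, funext fun x => ?_⟩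
    · have := (hlim x).div_const (gaussFn R x)
      refine this.congr fun k => ?_
      rw [hFh, mul_div_cancel_left₀ _ (gaussFn_pos R x).ne']
    · rw [mul_div_cancel₀ _ (gaussFn_pos R x).ne']
  have hl : ∫⁻ x, ENNReal.ofReal (f x) ≤ 1 := by
    have h1 : ∀ x, ENNReal.ofReal (f x) = liminf (fun k => ENNReal.ofReal (F k x)) atTop := fun x =>
      ((ENNReal.continuous_ofReal.tendsto _).comp (hlim x)).liminf_eq.symm
    simp only [h1]
    refine (lintegral_liminf_le fun k => (hF k).continuous.measurable.ennreal_ofReal).trans ?_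
    have h2 : ∀ k, ∫⁻ x, ENNReal.ofReal (F k x) = 1 := fun k => by
      rw [← ofReal_integral_eq_lintegral_ofReal (hF k).integrable (.of_forall (hF k).nonneg),
        hInt, ENNReal.ofReal_one]
    simp [h2]
  have hi : Integrable f := ⟨hconv.continuous.aestronglyMeasurable, by
    rw [hasFiniteIntegral_iff_ofReal (.of_forall hnn)]
    exact hl.trans_lt ENNReal.one_lt_top⟩
  refine ⟨⟨hconv, fun hb => ?_, hi⟩, ?_⟩
  · choose h hh hFh using fun k => (hF k).concave hb
    refine ⟨fun x => f x / gaussFn Q x, LogConcaveFun.of_tendsto hh fun x => ?_, funext fun x => ?_⟩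
    · have := (hlim x).div_const (gaussFn Q x)
      refine this.congr fun k => ?_
      rw [hFh, mul_div_cancel_left₀ _ (gaussFn_pos Q x).ne']
    · rw [mul_div_cancel₀ _ (gaussFn_pos Q x).ne']
  · rwa [← ENNReal.ofReal_le_one, ofReal_integral_eq_lintegral_ofReal hi (.of_forall hnn)]

theorem exists_subseq_tendsto_of_normalized (hR : ∀ i, (R i).PosDef)
    {F : ℕ → ∀ i, (Fin (ni i) → ℝ) → ℝ} (hF : ∀ k, Normalized R Q b (F k)) :
    ∃ (φ : ℕ → ℕ) (f : ∀ i, (Fin (ni i) → ℝ) → ℝ), StrictMono φ ∧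
      (∀ i x, Tendsto (fun k => F (φ k) i x) atTop (𝓝 (f i x))) ∧
      ∀ i, Sandwiched (R i) (Q i) (b i) (f i) ∧ ∫ x, f i x ≤ 1 := by
  choose h hh hFh using fun k i => (hF k i).1.convex
  set M : ∀ i, (Fin (ni i) → ℝ) → ℝ := fun i x => √(R i).det / gaussFn (R i) x with hM
  have hMc : ∀ i, Continuous (M i) := fun i =>
    continuous_const.div (continuous_gaussFn _) fun x => (gaussFn_pos _ x).ne'
  have hle : ∀ k i x, h k i x ≤ M i x := fun k i x => by
    have h1 := (hF k i).1.le_mul_integral (hR i) x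
    rw [(hF k i).2, mul_one, hFh] at h1
    rw [hM, le_div_iff₀ (gaussFn_pos _ x), mul_comm]
    exact h1
  obtain ⟨l, φ, hφ, hl⟩ := exists_strictMono_tendsto_of_bounded (ι := Fin m × ℕ)
    (u := fun k q => h k q.1 (TopologicalSpace.denseSeq (Fin (ni q.1) → ℝ) q.2))
    (fun k q => (hh k q.1).1 _) (fun k q => hle k q.1 _)
  have hex : ∀ i x, ∃ y, Tendsto (fun k => h (φ k) i x) atTop (𝓝 y) := fun i =>
    ConvexOn.exists_tendsto_of_dense (fun k => (hh (φ k) i).convexOn) (fun k => (hh (φ k) i).1)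
      (fun k => hle (φ k) i) (hMc i) fun j => hl (i, j)
  choose h' hh' using hex
  have hlim : ∀ i x, Tendsto (fun k => F (φ k) i x) atTop (𝓝 (gaussFn (R i) x * h' i x)) := by
    intro i x
    simp only [hFh]
    exact (hh' i x).const_mul _
  exact ⟨φ, fun i x => gaussFn (R i) x * h' i x, hφ, hlim, fun i =>
    Sandwiched.of_tendsto (fun k => (hF (φ k) i).1) (fun k => (hF (φ k) i).2) (hlim i)⟩

/-- Maximizing sequences are precompact. -/
theorem exists_subseq_tendsto_extremizer (hp : ∀ i, 0 < p i) (h𝒬 : 𝒬.PosDef)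
    (hR : ∀ i, (R i).PosDef) (h0 : blSup C p 𝒬 R Q b ≠ 0)
    {F : ℕ → ∀ i, (Fin (ni i) → ℝ) → ℝ} (hF : ∀ k, Normalized R Q b (F k))
    (hlim : Tendsto (fun k => blIntegral C p 𝒬 (F k)) atTop (𝓝 (blSup C p 𝒬 R Q b))) :
    ∃ (φ : ℕ → ℕ) (f : ∀ i, (Fin (ni i) → ℝ) → ℝ), StrictMono φ ∧
      (∀ i x, Tendsto (fun k => F (φ k) i x) atTop (𝓝 (f i x))) ∧
      Normalized R Q b f ∧ blIntegral C p 𝒬 f = blSup C p 𝒬 R Q b := by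
  obtain ⟨φ, f, hφ, hf, hfS⟩ := exists_subseq_tendsto_of_normalized hR hF
  have hi := ((integrable_gaussFn h𝒬).mul_const (∏ i, √(R i).det ^ p i)).lintegral_lt_top
  have hlim' : Tendsto (fun k => blIntegral C p 𝒬 (F (φ k))) atTop (𝓝 (blIntegral C p 𝒬 f)) := by
    refine tendsto_lintegral_of_dominated_convergence
      (fun x => ENNReal.ofReal (gaussFn 𝒬 x * ∏ i, √(R i).det ^ p i))
      (fun k => (continuous_blIntegrand hp fun i =>
        (hF (φ k) i).1.continuous).measurable.ennreal_ofReal)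
      (fun k => .of_forall fun x => ENNReal.ofReal_le_ofReal ((hF (φ k)).blIntegrand_le hp hR x))
      hi.ne (.of_forall fun x => ?_)
    refine (ENNReal.continuous_ofReal.tendsto _).comp (Tendsto.const_mul _ ?_)
    exact tendsto_finsetProd _ fun i _ => (hf i _).rpow_const (.inr (hp i).le)
  have hE : blIntegral C p 𝒬 f = blSup C p 𝒬 R Q b :=
    tendsto_nhds_unique hlim' (hlim.comp hφ.tendsto_atTop)
  refine ⟨φ, f, hφ, hf, fun i => ⟨(hfS i).1, ?_⟩, hE⟩
  have hle := blIntegral_le_blSup_mul (C := C) (𝒬 := 𝒬) hp hR fun i => (hfS i).1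
  rw [hE] at hle
  refine le_antisymm (hfS i).2 (not_lt.1 fun hlt => ?_)
  have hone : ∏ j, ENNReal.ofReal (∫ x, f j x) ^ p j < 1 := by
    rw [← Finset.mul_prod_erase _ _ (Finset.mem_univ i)]
    refine lt_of_le_of_lt (mul_le_of_le_one_right' (Finset.prod_le_one' fun j _ => ?_)) ?_
    · exact ENNReal.rpow_le_one (ENNReal.ofReal_le_one.2 (hfS j).2) (hp j).le
    · exact ENNReal.rpow_lt_one (by simpa using hlt) (hp i)
  have := ENNReal.mul_lt_mul_right (a := blSup C p 𝒬 R Q b) h0 (blSup_lt_top hp h𝒬 hR).ne hone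
  rw [mul_one] at this
  exact absurd hle (not_le.2 this)

theorem exists_extremizer (hp : ∀ i, 0 < p i) (h𝒬 : 𝒬.PosDef)
    (hR : ∀ i, (R i).PosDef) (h0 : blSup C p 𝒬 R Q b ≠ 0) :
    ∃ f, Normalized R Q b f ∧ blIntegral C p 𝒬 f = blSup C p 𝒬 R Q b := by
  have hlt : ∀ c < blSup C p 𝒬 R Q b, ∃ f, Normalized R Q b f ∧ c < blIntegral C p 𝒬 f := by
    intro c hc
    simpa only [blSup, lt_iSup_iff, exists_prop] using hc
  obtain ⟨u, -, hu, hut⟩ := exists_seq_strictMono_tendsto' (pos_iff_ne_zero.2 h0)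
  choose F hF hFu using fun k => hlt (u k) (hu k).2
  obtain ⟨φ, f, -, -, hf⟩ := exists_subseq_tendsto_extremizer hp h𝒬 hR h0 hF
    (tendsto_of_tendsto_of_tendsto_of_le_of_le hut tendsto_const_nhds (fun k => (hFu k).le)
      fun k => (hF k).blIntegral_le_blSup)
  exact ⟨f, hf⟩

theorem Normalized.circ (hR : ∀ i, (R i).PosDef) (hQ : ∀ i, (Q i).PosDef)
    (hf : Normalized R Q b f) (hg : Normalized R Q b g) :
    Normalized R Q b fun i => circ (f i) (g i) := fun i =>
  ⟨(hf i).1.circ (hR i) (hQ i) (hg i).1, by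
    rw [(hf i).1.integral_circ (hg i).1, (hf i).2, (hg i).2, one_mul]⟩

/-- The class of extremizers is closed under `circ`. -/
theorem blIntegral_circ_eq_blSup (hp : ∀ i, 0 < p i) (h𝒬 : 𝒬.PosDef)
    (hR : ∀ i, (R i).PosDef) (hQ : ∀ i, (Q i).PosDef) (h0 : blSup C p 𝒬 R Q b ≠ 0)
    (hf : Normalized R Q b f) (hg : Normalized R Q b g)
    (hfe : blIntegral C p 𝒬 f = blSup C p 𝒬 R Q b) (hge : blIntegral C p 𝒬 g = blSup C p 𝒬 R Q b) :
    blIntegral C p 𝒬 (fun i => _root_.circ (f i) (g i)) = blSup C p 𝒬 R Q b := by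
  refine le_antisymm (hf.circ hR hQ hg).blIntegral_le_blSup ?_
  have h1 := blIntegral_mul_le (C := C) hp h𝒬 hR (fun i => (hf i).1) fun i => (hg i).1
  rw [hfe, hge] at h1
  exact (ENNReal.mul_le_mul_iff_right h0 (blSup_lt_top hp h𝒬 hR).ne).1 h1

theorem blIntegral_comp_neg (f : ∀ i, (Fin (ni i) → ℝ) → ℝ) :
    blIntegral C p 𝒬 (fun i x => f i (-x)) = blIntegral C p 𝒬 f := by
  rw [blIntegral, blIntegral, ← lintegral_neg_eq_self]
  refine lintegral_congr fun x => ?_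
  simp [blIntegrand, gaussFn_neg, mulVec_neg]

end BrascampLieb

section Fourier

open Filter Topology Complex

variable {d : ℕ} {f g : (Fin d → ℝ) → ℝ} {R Q : Matrix (Fin d) (Fin d) ℝ} {b : Prop}

/-- The characteristic function of a density. -/
def charDensity (f : (Fin d → ℝ) → ℝ) (c : Fin d → ℝ) : ℂ :=
  ∫ x, (f x : ℂ) * cexp ((c ⬝ᵥ x : ℝ) * I)

theorem charDensity_circ (hf : Sandwiched R Q b f) (hg : Sandwiched R Q b g) (c : Fin d → ℝ) :
    charDensity (circ f g) c = charDensity f ((√2)⁻¹ • c) * charDensity g ((√2)⁻¹ • c) := by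
  rw [charDensity, hf.integral_circ_mul hg (by fun_prop) fun x => (norm_exp_ofReal_mul_I _).le,
    charDensity, charDensity, ← integral_mul_const]
  refine integral_congr_ae (.of_forall fun x => ?_)
  simp only
  rw [← integral_const_mul]
  refine integral_congr_ae (.of_forall fun y => ?_)
  simp only [smul_dotProduct, dotProduct_smul, dotProduct_add, smul_eq_mul, ofReal_mul, ofReal_add,
    mul_add, add_mul, Complex.exp_add]
  ring

theorem charDensity_circ_iterate (hR : R.PosDef) (hQ : Q.PosDef) {G : ℕ → (Fin d → ℝ) → ℝ}
    (h0 : Sandwiched R Q b (G 0)) (hG : ∀ k, G (k + 1) = circ (G k) (G k)) (k : ℕ) :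
    Sandwiched R Q b (G k) ∧
      ∀ c, charDensity (G k) c = charDensity (G 0) ((√2)⁻¹ ^ k • c) ^ 2 ^ k := by
  induction k with
  | zero => simp [h0]
  | succ k ih =>
    refine ⟨by rw [hG]; exact ih.1.circ hR hQ ih.1, fun c => ?_⟩
    rw [hG, charDensity_circ ih.1 ih.1, ih.2, smul_smul, ← pow_succ, ← pow_two, ← pow_mul,
      ← pow_succ]

theorem charDensity_of_even (hf : Integrable f) (he : ∀ x, f (-x) = f x) (c : Fin d → ℝ) :
    charDensity f c = (∫ x, f x * Real.cos (c ⬝ᵥ x) : ℝ) := by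
  have hb : Integrable fun x => f x * Real.sin (c ⬝ᵥ x) :=
    hf.mul_bdd (c := 1) (by fun_prop) (.of_forall fun x => Real.abs_sin_le_one _)
  have ha : Integrable fun x => f x * Real.cos (c ⬝ᵥ x) :=
    hf.mul_bdd (c := 1) (by fun_prop) (.of_forall fun x => Real.abs_cos_le_one _)
  have hs : ∫ x, f x * Real.sin (c ⬝ᵥ x) = 0 := by
    have h1 := integral_neg_eq_self (fun x => f x * Real.sin (c ⬝ᵥ x)) volume
    simp only [he, dotProduct_neg, Real.sin_neg, mul_neg, integral_neg] at h1
    linarith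
  have : ∀ x, (f x : ℂ) * cexp ((c ⬝ᵥ x : ℝ) * I) =
      ((f x * Real.cos (c ⬝ᵥ x) : ℝ) : ℂ) + ((f x * Real.sin (c ⬝ᵥ x) : ℝ) : ℂ) * I := fun x => by
    rw [exp_mul_I]
    push_cast
    ring
  simp only [charDensity, this]
  have ha' : Integrable fun x => ((f x * Real.cos (c ⬝ᵥ x) : ℝ) : ℂ) := ha.ofReal
  have hb' : Integrable fun x => ((f x * Real.sin (c ⬝ᵥ x) : ℝ) : ℂ) * I := hb.ofReal.mul_const I
  rw [integral_add ha' hb', integral_mul_const, integral_complex_ofReal, integral_complex_ofReal,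
    hs]
  simp

/-- Continuous densities with the same characteristic function agree. -/
theorem eq_of_charDensity_eq (hf : Integrable f) (hg : Integrable g) (hfc : Continuous f)
    (hgc : Continuous g) (hf0 : ∀ x, 0 ≤ f x) (hg0 : ∀ x, 0 ≤ g x)
    (h : ∀ c, charDensity f c = charDensity g c) : f = g := by
  have hfm := hfc.measurable.ennreal_ofReal
  have hgm := hgc.measurable.ennreal_ofReal
  have := isFiniteMeasure_withDensity_ofReal hf.2
  have := isFiniteMeasure_withDensity_ofReal hg.2
  have hchar : ∀ {u : (Fin d → ℝ) → ℝ}, Continuous u → (∀ x, 0 ≤ u x) → ∀ L,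
      charFunDual (volume.withDensity fun x => ENNReal.ofReal (u x)) L =
        charDensity u fun i => L (Pi.single i 1) := by
    intro u hu hu0 L
    rw [charFunDual_apply, integral_withDensity_eq_integral_toReal_smul hu.measurable.ennreal_ofReal
      (.of_forall fun x => ENNReal.ofReal_lt_top), charDensity]
    refine integral_congr_ae (.of_forall fun x => ?_)
    have hL : L x = (fun i => L (Pi.single i 1)) ⬝ᵥ x := by
      conv_lhs => rw [pi_eq_sum_univ' x, map_sum]
      simp [dotProduct, mul_comm]
    simp only [ENNReal.toReal_ofReal (hu0 x), hL, Complex.real_smul]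
  have hm : (volume.withDensity fun x => ENNReal.ofReal (f x)) =
      volume.withDensity fun x => ENNReal.ofReal (g x) := by
    refine Measure.ext_of_charFunDual (funext fun L => ?_)
    rw [hchar hfc hf0, hchar hgc hg0, h]
  rw [withDensity_eq_iff_of_sigmaFinite hfm.aemeasurable hgm.aemeasurable] at hm
  refine (Continuous.ae_eq_iff_eq volume hfc hgc).1 ?_
  filter_upwards [hm] with x hx
  exact (ENNReal.ofReal_eq_ofReal_iff (hf0 x) (hg0 x)).1 hx

/-- Pointwise convergence of probability densities implies convergence of characteristic
functions. -/
theorem tendsto_charDensity {F : ℕ → (Fin d → ℝ) → ℝ} (hF : ∀ k, Integrable (F k))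
    (hg : Integrable g) (hF0 : ∀ k x, 0 ≤ F k x) (hg0 : ∀ x, 0 ≤ g x) (hF1 : ∀ k, ∫ x, F k x = 1)
    (hg1 : ∫ x, g x = 1) (hlim : ∀ x, Tendsto (fun k => F k x) atTop (𝓝 (g x)))
    (c : Fin d → ℝ) : Tendsto (fun k => charDensity (F k) c) atTop (𝓝 (charDensity g c)) := by
  have hexp : Continuous fun x : Fin d → ℝ => cexp ((c ⬝ᵥ x : ℝ) * I) := by fun_prop
  have hInt : ∀ {u : (Fin d → ℝ) → ℝ}, Integrable u →
      Integrable fun x => (u x : ℂ) * cexp ((c ⬝ᵥ x : ℝ) * I) := fun hu =>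
    (hu.ofReal (𝕜 := ℂ)).mul_bdd (c := 1) hexp.aestronglyMeasurable
      (.of_forall fun x => (norm_exp_ofReal_mul_I _).le)
  have hpos : Tendsto (fun k => ∫ x, max (g x - F k x) 0) atTop (𝓝 0) := by
    have h1 := tendsto_integral_of_dominated_convergence (μ := volume)
      (F := fun k x => max (g x - F k x) 0) (f := fun _ => 0) g
      (fun k => ((hg.sub (hF k)).pos_part).aestronglyMeasurable) hg
      (fun k => .of_forall fun x => by
        rw [Real.norm_of_nonneg (le_max_right _ _)]
        exact max_le (by linarith [hF0 k x]) (hg0 x))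
      (.of_forall fun x => by
        have := ((tendsto_const_nhds (x := g x)).sub (hlim x)).max (tendsto_const_nhds (x := (0 : ℝ)))
        simpa using this)
    simpa using h1
  rw [tendsto_iff_norm_sub_tendsto_zero]
  refine squeeze_zero (fun k => norm_nonneg _) (fun k => ?_) (by simpa using hpos.const_mul 2)
  rw [charDensity, charDensity, ← integral_sub (hInt (hF k)) (hInt hg)]
  have h2 : ∫ x, |F k x - g x| = 2 * ∫ x, max (g x - F k x) 0 := by
    have h3 : ∀ x, |F k x - g x| = 2 * max (g x - F k x) 0 + (F k x - g x) := fun x => by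
      rcases le_total (F k x) (g x) with h | h
      · rw [abs_of_nonpos (by linarith), max_eq_left (by linarith)]; ring
      · rw [abs_of_nonneg (by linarith), max_eq_right (by linarith)]; ring
    have h4 : Integrable fun x => 2 * max (g x - F k x) 0 := ((hg.sub (hF k)).pos_part).const_mul 2
    have h5 : Integrable fun x => F k x - g x := (hF k).sub hg
    simp only [h3]
    rw [integral_add h4 h5, integral_const_mul,
      integral_sub (hF k) hg, hF1, hg1]
    ring
  rw [← h2]
  refine (norm_integral_le_integral_norm _).trans_eq (integral_congr_ae (.of_forall fun x => ?_))
  simp only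
  rw [← sub_mul, norm_mul, norm_exp_ofReal_mul_I, mul_one, ← ofReal_sub, norm_real, Real.norm_eq_abs]

end Fourier

section CentralLimit

open Filter Topology

variable {d : ℕ} {f g : (Fin d → ℝ) → ℝ} {R Q : Matrix (Fin d) (Fin d) ℝ} {b : Prop}

theorem mul_one_sub_cos_div_sqrt {n : ℕ} (hn : 0 < n) (t : ℝ) :
    n * (1 - Real.cos ((√n)⁻¹ * t)) = t ^ 2 / 2 * Real.sinc ((√n)⁻¹ * t / 2) ^ 2 := by
  have hn' : (0 : ℝ) < n := by exact_mod_cast hn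
  have hs : √(n : ℝ) ≠ 0 := (Real.sqrt_pos.2 hn').ne'
  have hsq : √(n : ℝ) ^ 2 = n := Real.sq_sqrt hn'.le
  have h1 : 1 - Real.cos ((√n)⁻¹ * t) = 2 * Real.sin ((√n)⁻¹ * t / 2) ^ 2 := by
    rw [Real.sin_sq_eq_half_sub]
    ring_nf
  rw [h1]
  rcases eq_or_ne t 0 with rfl | ht
  · simp
  rw [Real.sinc_of_ne_zero (by positivity)]
  field_simp
  rw [hsq]

theorem tendsto_mul_one_sub_cos (t : ℝ) :
    Tendsto (fun n : ℕ => n * (1 - Real.cos ((√n)⁻¹ * t))) atTop (𝓝 (t ^ 2 / 2)) := by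
  have h0 : Tendsto (fun n : ℕ => (√(n : ℝ))⁻¹) atTop (𝓝 0) :=
    tendsto_inv_atTop_zero.comp (Real.tendsto_sqrt_atTop.comp tendsto_natCast_atTop_atTop)
  have h1 : Tendsto (fun n : ℕ => t ^ 2 / 2 * Real.sinc ((√(n : ℝ))⁻¹ * t / 2) ^ 2) atTop
      (𝓝 (t ^ 2 / 2 * Real.sinc (0 * t / 2) ^ 2)) :=
    (((Real.continuous_sinc.tendsto _).comp ((h0.mul_const t).div_const 2)).pow 2).const_mul _
  simp only [zero_mul, zero_div, Real.sinc_zero, one_pow, mul_one] at h1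
  refine h1.congr' ?_
  filter_upwards [eventually_gt_atTop 0] with n hn
  rw [mul_one_sub_cos_div_sqrt hn]

theorem mul_one_sub_cos_le (n : ℕ) (t : ℝ) : n * (1 - Real.cos ((√n)⁻¹ * t)) ≤ t ^ 2 / 2 := by
  rcases Nat.eq_zero_or_pos n with rfl | hn
  · simp; positivity
  rw [mul_one_sub_cos_div_sqrt hn]
  have := Real.abs_sinc_le_one ((√n)⁻¹ * t / 2)
  exact mul_le_of_le_one_right (by positivity) (sq_le_one_iff_abs_le_one _ |>.2 this)

theorem integrable_mul_cos (hf : Integrable f) (c : Fin d → ℝ) :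
    Integrable fun x => f x * Real.cos (c ⬝ᵥ x) :=
  hf.mul_bdd (c := 1) (by fun_prop) (.of_forall fun x => Real.abs_cos_le_one _)

theorem mul_one_sub_integral_cos (hf : Integrable f) (h1 : ∫ x, f x = 1) (c : Fin d → ℝ) (n : ℕ) :
    n * (1 - ∫ x, f x * Real.cos (((√n)⁻¹ • c) ⬝ᵥ x)) =
      ∫ x, f x * (n * (1 - Real.cos ((√n)⁻¹ * (c ⬝ᵥ x)))) := by
  have h2 := integral_sub hf (integrable_mul_cos hf ((√n)⁻¹ • c))
  rw [h1] at h2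
  rw [← h2, ← integral_const_mul]
  refine integral_congr_ae (.of_forall fun x => ?_)
  simp only [smul_dotProduct, smul_eq_mul]
  ring

theorem continuous_integral_cos (hf : Integrable f) :
    Continuous fun c : Fin d → ℝ => ∫ x, f x * Real.cos (c ⬝ᵥ x) := by
  refine continuous_of_dominated (bound := fun x => |f x|)
    (fun c => (integrable_mul_cos hf c).aestronglyMeasurable)
    (fun c => .of_forall fun x => ?_) hf.abs (.of_forall fun x => by fun_prop)
  rw [norm_mul]
  exact mul_le_of_le_one_right (norm_nonneg _) (Real.abs_cos_le_one _)

/-- If the powers `φ(c / √n) ^ n` stay away from zero along a subsequence, then the density has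
finite second moment in direction `c`. -/
theorem integrable_sq_of_tendsto_pow (hf : Integrable f) (hf0 : ∀ x, 0 ≤ f x) (h1 : ∫ x, f x = 1)
    (c : Fin d → ℝ) {N : ℕ → ℕ} (hN : Tendsto N atTop atTop) {y : ℝ} (hy : 0 < y)
    (hlim : Tendsto (fun j => (∫ x, f x * Real.cos (((√(N j))⁻¹ • c) ⬝ᵥ x)) ^ N j) atTop (𝓝 y)) :
    Integrable fun x => f x * (c ⬝ᵥ x) ^ 2 := by
  have hc : Continuous fun x : Fin d → ℝ => c ⬝ᵥ x := by fun_prop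
  set a : ℕ → ℝ := fun j => ∫ x, f x * Real.cos (((√(N j))⁻¹ • c) ⬝ᵥ x) with ha
  have ha1 : Tendsto a atTop (𝓝 1) := by
    have h0 : Tendsto (fun j => (√(N j : ℝ))⁻¹ • c) atTop (𝓝 ((0 : ℝ) • c)) :=
      (tendsto_inv_atTop_zero.comp (Real.tendsto_sqrt_atTop.comp
        (tendsto_natCast_atTop_atTop.comp hN))).smul_const c
    have := ((continuous_integral_cos hf).tendsto _).comp h0
    simp only [zero_smul, zero_dotProduct, Real.cos_zero, mul_one, h1] at this
    exact this
  have hle : ∀ᶠ j in atTop, N j * (1 - a j) ≤ -Real.log (a j ^ N j) := by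
    filter_upwards [ha1.eventually (lt_mem_nhds one_pos)] with j hj
    rw [Real.log_pow]
    nlinarith [Real.log_le_sub_one_of_pos hj, (Nat.cast_nonneg (N j) : (0 : ℝ) ≤ N j)]
  have hlog : Tendsto (fun j => -Real.log (a j ^ N j)) atTop (𝓝 (-Real.log y)) :=
    (hlim.log hy.ne').neg
  have hnn : ∀ j x, 0 ≤ f x * (N j * (1 - Real.cos ((√(N j))⁻¹ * (c ⬝ᵥ x)))) := fun j x =>
    mul_nonneg (hf0 x) (mul_nonneg (Nat.cast_nonneg _) (by linarith [Real.cos_le_one ((√(N j))⁻¹ * (c ⬝ᵥ x))]))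
  have hIntj : ∀ j, Integrable fun x => f x * (N j * (1 - Real.cos ((√(N j))⁻¹ * (c ⬝ᵥ x)))) := by
    intro j
    have := (hf.sub (integrable_mul_cos hf ((√(N j))⁻¹ • c))).const_mul (N j : ℝ)
    refine this.congr (.of_forall fun x => ?_)
    simp only [Pi.sub_apply, smul_dotProduct, smul_eq_mul]
    ring
  have hfin : ∫⁻ x, ENNReal.ofReal (f x * ((c ⬝ᵥ x) ^ 2 / 2)) < ∞ := by
    have hl : ∀ x, ENNReal.ofReal (f x * ((c ⬝ᵥ x) ^ 2 / 2)) = liminf (fun j =>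
        ENNReal.ofReal (f x * (N j * (1 - Real.cos ((√(N j))⁻¹ * (c ⬝ᵥ x)))))) atTop := fun x =>
      ((ENNReal.continuous_ofReal.tendsto _).comp
        (((tendsto_mul_one_sub_cos (c ⬝ᵥ x)).comp hN).const_mul (f x))).liminf_eq.symm
    simp only [hl]
    refine (lintegral_liminf_le' fun j => (hIntj j).aemeasurable.ennreal_ofReal).trans_lt ?_
    have he : ∀ j, ∫⁻ x, ENNReal.ofReal (f x * (N j * (1 - Real.cos ((√(N j))⁻¹ * (c ⬝ᵥ x))))) =
        ENNReal.ofReal (N j * (1 - a j)) := fun j => by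
      rw [← ofReal_integral_eq_lintegral_ofReal (hIntj j) (.of_forall (hnn j)), ha,
        mul_one_sub_integral_cos hf h1]
    simp only [he]
    refine (liminf_le_liminf (hle.mono fun j hj => ENNReal.ofReal_le_ofReal hj)).trans_lt ?_
    have ht : Tendsto (fun j => ENNReal.ofReal (-Real.log (a j ^ N j))) atTop
        (𝓝 (ENNReal.ofReal (-Real.log y))) := (ENNReal.continuous_ofReal.tendsto _).comp hlog
    rw [ht.liminf_eq]
    exact ENNReal.ofReal_lt_top
  have hi : Integrable fun x => f x * ((c ⬝ᵥ x) ^ 2 / 2) :=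
    ⟨hf.aestronglyMeasurable.mul ((hc.pow 2).div_const 2).aestronglyMeasurable, by
      rwa [hasFiniteIntegral_iff_ofReal (.of_forall fun x => mul_nonneg (hf0 x) (by positivity))]⟩
  refine (hi.const_mul 2).congr (.of_forall fun x => ?_)
  simp only
  ring

/-- The central limit theorem at the level of characteristic functions. -/
theorem tendsto_integral_cos_pow (hf : Integrable f) (hf0 : ∀ x, 0 ≤ f x) (h1 : ∫ x, f x = 1)
    (c : Fin d → ℝ) (h2 : Integrable fun x => f x * (c ⬝ᵥ x) ^ 2) :
    Tendsto (fun n : ℕ => (∫ x, f x * Real.cos (((√n)⁻¹ • c) ⬝ᵥ x)) ^ n) atTop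
      (𝓝 (Real.exp (-(∫ x, f x * (c ⬝ᵥ x) ^ 2) / 2))) := by
  have hlim : Tendsto (fun n : ℕ => n * (1 - ∫ x, f x * Real.cos (((√n)⁻¹ • c) ⬝ᵥ x))) atTop
      (𝓝 (∫ x, f x * ((c ⬝ᵥ x) ^ 2 / 2))) := by
    simp only [mul_one_sub_integral_cos hf h1]
    refine tendsto_integral_of_dominated_convergence (fun x => f x * ((c ⬝ᵥ x) ^ 2 / 2))
      (fun n => hf.aestronglyMeasurable.mul (Continuous.aestronglyMeasurable (by fun_prop))) ?_
      (fun n => .of_forall fun x => ?_)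
      (.of_forall fun x => (tendsto_mul_one_sub_cos (c ⬝ᵥ x)).const_mul (f x))
    · refine (h2.div_const 2).congr (.of_forall fun x => ?_)
      simp only
      ring
    · rw [Real.norm_of_nonneg (mul_nonneg (hf0 x) (mul_nonneg (Nat.cast_nonneg _)
        (by linarith [Real.cos_le_one ((√n)⁻¹ * (c ⬝ᵥ x))])))]
      exact mul_le_mul_of_nonneg_left (mul_one_sub_cos_le n _) (hf0 x)
  have hE : ∫ x, f x * ((c ⬝ᵥ x) ^ 2 / 2) = (∫ x, f x * (c ⬝ᵥ x) ^ 2) / 2 := by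
    rw [← integral_div]
    refine integral_congr_ae (.of_forall fun x => ?_)
    simp only
    ring
  rw [hE] at hlim
  have := Real.tendsto_one_add_pow_exp_of_tendsto
    (g := fun n : ℕ => (∫ x, f x * Real.cos (((√n)⁻¹ • c) ⬝ᵥ x)) - 1)
    (t := -(∫ x, f x * (c ⬝ᵥ x) ^ 2) / 2) (by
      rw [neg_div]
      refine hlim.neg.congr fun n => ?_
      ring)
  simpa using this

/-- The covariance matrix of a centered density. -/
def covMatrix (f : (Fin d → ℝ) → ℝ) : Matrix (Fin d) (Fin d) ℝ :=
  Matrix.of fun i j => ∫ x, f x * (x i * x j)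

theorem dotProduct_covMatrix_mulVec (hi : ∀ c : Fin d → ℝ, Integrable fun x => f x * (c ⬝ᵥ x) ^ 2)
    (c : Fin d → ℝ) : c ⬝ᵥ (covMatrix f).mulVec c = ∫ x, f x * (c ⬝ᵥ x) ^ 2 := by
  have hij : ∀ i j, Integrable fun x : Fin d → ℝ => f x * (x i * x j) := fun i j => by
    have h1 := ((hi (Pi.single i 1 + Pi.single j 1)).sub
      (hi (Pi.single i 1 - Pi.single j 1))).div_const 4
    refine h1.congr (.of_forall fun x => ?_)
    simp only [Pi.sub_apply, add_dotProduct, sub_dotProduct, single_dotProduct, one_mul]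
    ring
  have h2 : ∀ x, f x * (c ⬝ᵥ x) ^ 2 = ∑ i, ∑ j, c i * c j * (f x * (x i * x j)) := fun x => by
    rw [pow_two, dotProduct, Finset.sum_mul_sum, Finset.mul_sum]
    refine Finset.sum_congr rfl fun i _ => ?_
    rw [Finset.mul_sum]
    exact Finset.sum_congr rfl fun j _ => by ring
  simp only [h2]
  rw [integral_finsetSum _ fun i _ => integrable_finsetSum _ fun j _ => (hij i j).const_mul _]
  simp only [dotProduct, mulVec, Finset.mul_sum]
  refine Finset.sum_congr rfl fun i _ => ?_
  rw [integral_finsetSum _ fun j _ => (hij i j).const_mul _]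
  refine Finset.sum_congr rfl fun j _ => ?_
  rw [integral_const_mul, covMatrix, of_apply]
  ring

theorem posDef_covMatrix (hf : Sandwiched R Q b f) (h1 : ∫ x, f x = 1)
    (hi : ∀ c : Fin d → ℝ, Integrable fun x => f x * (c ⬝ᵥ x) ^ 2) : (covMatrix f).PosDef := by
  refine PosDef.of_dotProduct_mulVec_pos ?_ fun {c} hc => ?_
  · ext i j
    simp [covMatrix, mul_comm]
  · rw [star_trivial, dotProduct_covMatrix_mulVec hi]
    have hnn : ∀ x, 0 ≤ f x * (c ⬝ᵥ x) ^ 2 := fun x => mul_nonneg (hf.nonneg x) (sq_nonneg _)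
    refine lt_of_le_of_ne (integral_nonneg hnn) fun h0 => ?_
    have hcont : Continuous fun x => f x * (c ⬝ᵥ x) ^ 2 :=
      hf.continuous.mul (by fun_prop)
    have hz := (Continuous.ae_eq_iff_eq volume hcont continuous_zero).1
      ((integral_eq_zero_iff_of_nonneg hnn (hi c)).1 h0.symm)
    have hcc : 0 < c ⬝ᵥ c := lt_of_le_of_ne (Finset.sum_nonneg fun i _ => mul_self_nonneg _)
      fun h => hc (dotProduct_self_eq_zero.1 h.symm)
    have hz' : ∀ x, c ⬝ᵥ x ≠ 0 → f x = 0 := fun x hx => by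
      have := congrFun hz x
      simpa [hx] using this
    have hf0 : ∀ x, f x = 0 := fun x => by
      by_contra hx
      have hx0 : c ⬝ᵥ x = 0 := by by_contra h; exact hx (hz' x h)
      have h3 := hf.convex.mul_gaussFn_le x c
      rw [hz' (x + c) (by rw [dotProduct_add, hx0, zero_add]; exact hcc.ne'),
        hz' (x - c) (by rw [dotProduct_sub, hx0, zero_sub]; exact (neg_neg_of_pos hcc).ne)] at h3
      have h4 := mul_pos (lt_of_le_of_ne (hf.nonneg x) (Ne.symm hx)) (gaussFn_pos R c)
      linarith
    simp [hf0] at h1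

end CentralLimit

section GaussianLimit

open Filter Topology

variable {d : ℕ} {f g : (Fin d → ℝ) → ℝ} {R Q B : Matrix (Fin d) (Fin d) ℝ} {b : Prop}

theorem gaussFn_le_gaussFn_iff {x : Fin d → ℝ} :
    gaussFn R x ≤ gaussFn B x ↔ B.mulVec x ⬝ᵥ x ≤ R.mulVec x ⬝ᵥ x := by
  rw [gaussFn, gaussFn, Real.exp_le_exp, neg_mul, neg_mul, neg_le_neg_iff,
    mul_le_mul_iff_right₀ Real.pi_pos]

theorem posSemidef_sub_iff_gaussFn_le (hR : R.PosDef) (hB : B.PosDef) :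
    (R - B).PosSemidef ↔ ∀ x, gaussFn R x ≤ gaussFn B x := by
  rw [posSemidef_iff_dotProduct_mulVec]
  simp only [hR.isHermitian.sub hB.isHermitian, true_and, star_trivial, gaussFn_le_gaussFn_iff,
    sub_mulVec, dotProduct_sub, sub_nonneg]
  simp only [dotProduct_comm]

theorem MoreLogConvex.posSemidef_sub {a : ℝ} (ha : 0 < a) (hR : R.PosDef) (hB : B.PosDef)
    (h : MoreLogConvex (fun x => a * gaussFn B x) R) : (R - B).PosSemidef := by
  rw [posSemidef_sub_iff_gaussFn_le hR hB]
  intro w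
  have h1 := h.mul_gaussFn_le 0 w
  simp only [zero_add, zero_sub, gaussFn_neg, add_self_div_two] at h1
  have h0 : gaussFn B 0 = 1 := by simp [gaussFn]
  rw [h0, mul_one] at h1
  exact le_of_mul_le_mul_left h1 ha

theorem MoreLogConcave.posSemidef_sub {a : ℝ} (ha : 0 < a) (hQ : Q.PosDef) (hB : B.PosDef)
    (h : MoreLogConcave (fun x => a * gaussFn B x) Q) : (B - Q).PosSemidef := by
  rw [posSemidef_sub_iff_gaussFn_le hB hQ]
  intro w
  obtain ⟨u, hu, he⟩ := h
  have hu' : ∀ x, gaussFn Q x * u x = a * gaussFn B x := fun x => (congrFun he x).symm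
  have h0 : ∀ M : Matrix (Fin d) (Fin d) ℝ, gaussFn M 0 = 1 := fun M => by simp [gaussFn]
  have hu0 : u 0 = a := by simpa [h0] using hu' 0
  have hneg : u (-w) = u w := by
    have h1 := hu' (-w)
    rw [gaussFn_neg, gaussFn_neg, ← hu' w] at h1
    exact mul_left_cancel₀ (gaussFn_pos Q w).ne' h1
  have h1 := hu.2 w (-w) (1 / 2) (1 / 2) (by norm_num) (by norm_num) (by norm_num)
  rw [hneg, ← Real.rpow_add_of_nonneg (hu.1 w) (by norm_num) (by norm_num), smul_neg,
    add_neg_cancel, hu0] at h1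
  norm_num at h1
  have h2 := hu' w
  have h3 := mul_le_mul_of_nonneg_left h1 (gaussFn_pos Q w).le
  rw [h2, mul_comm] at h3
  exact le_of_mul_le_mul_right h3 ha

theorem charDensity_gaussFn (hB : B.PosDef) (c : Fin d → ℝ) :
    charDensity (fun x => √B.det * gaussFn B x) c =
      (Real.exp (-(c ⬝ᵥ B⁻¹.mulVec c) / (4 * Real.pi)) : ℝ) := by
  have hd : (√B.det : ℂ) ≠ 0 := by exact_mod_cast (Real.sqrt_pos.2 hB.det_pos).ne'
  simp only [charDensity, Complex.ofReal_mul, mul_assoc, integral_const_mul,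
    integral_gaussFn_mul_cexp hB]
  rw [Complex.ofReal_inv, mul_inv_cancel_left₀ hd, Complex.ofReal_exp]

/-- A limit of renormalized self-convolutions of an even density is a Gaussian density. -/
theorem exists_gaussFn_of_tendsto_circ (hR : R.PosDef) (hQ : Q.PosDef) {G : ℕ → (Fin d → ℝ) → ℝ}
    (hG0 : Sandwiched R Q b (G 0)) (heven : ∀ x, G 0 (-x) = G 0 x) (h1 : ∀ k, ∫ x, G k x = 1)
    (hG : ∀ k, G (k + 1) = circ (G k) (G k)) {φ : ℕ → ℕ} (hφ : StrictMono φ)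
    (hg : Sandwiched R Q b g) (hg1 : ∫ x, g x = 1)
    (hlim : ∀ x, Tendsto (fun j => G (φ j) x) atTop (𝓝 (g x))) :
    ∃ B : Matrix (Fin d) (Fin d) ℝ, B.PosDef ∧ g = fun x => √B.det * gaussFn B x := by
  set N : ℕ → ℕ := fun j => 2 ^ φ j with hN
  have hNtop : Tendsto N atTop atTop :=
    (tendsto_pow_atTop_atTop_of_one_lt one_lt_two).comp hφ.tendsto_atTop
  have hS := charDensity_circ_iterate hR hQ hG0 hG
  have hscale : ∀ j, (√2)⁻¹ ^ φ j = (√(N j : ℝ))⁻¹ := fun j => by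
    rw [inv_pow, hN]
    congr 1
    push_cast
    rw [Real.sqrt_eq_rpow, Real.sqrt_eq_rpow, ← Real.rpow_natCast, ← Real.rpow_natCast,
      ← Real.rpow_mul (by norm_num), ← Real.rpow_mul (by norm_num), mul_comm]
  have hchar : ∀ c, Tendsto (fun j =>
      (((∫ x, G 0 x * Real.cos (((√(N j : ℝ))⁻¹ • c) ⬝ᵥ x)) ^ N j : ℝ) : ℂ)) atTop
      (𝓝 (charDensity g c)) := fun c => by
    have := tendsto_charDensity (fun j => (hS (φ j)).1.integrable) hg.integrable
      (fun j => (hS (φ j)).1.nonneg) hg.nonneg (fun j => h1 _) hg1 hlim c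
    refine this.congr fun j => ?_
    rw [(hS (φ j)).2, hscale, charDensity_of_even hG0.integrable heven, Complex.ofReal_pow]
  have hreal : ∀ c, Tendsto (fun j =>
      (∫ x, G 0 x * Real.cos (((√(N j : ℝ))⁻¹ • c) ⬝ᵥ x)) ^ N j) atTop
      (𝓝 (charDensity g c).re) := fun c =>
    (Complex.continuous_re.tendsto _).comp (hchar c)
  have him : ∀ c, ((charDensity g c).re : ℂ) = charDensity g c := fun c =>
    tendsto_nhds_unique ((Complex.continuous_ofReal.tendsto _).comp (hreal c)) (hchar c)
  have hre : ∀ c, (charDensity g c).re = ∫ x, g x * Real.cos (c ⬝ᵥ x) := fun c => by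
    have hi : Integrable fun x => (g x : ℂ) * Complex.exp ((c ⬝ᵥ x : ℝ) * Complex.I) :=
      (hg.integrable.ofReal (𝕜 := ℂ)).mul_bdd (c := 1) (by fun_prop)
        (.of_forall fun x => (Complex.norm_exp_ofReal_mul_I _).le)
    rw [charDensity, ← RCLike.re_eq_complex_re, ← integral_re hi]
    refine integral_congr_ae (.of_forall fun x => ?_)
    simp [Complex.exp_ofReal_mul_I_re]
  have hsq : ∀ c : Fin d → ℝ, Integrable fun x => G 0 x * (c ⬝ᵥ x) ^ 2 := fun c => by
    have hcont : Continuous fun t : ℝ => ∫ x, g x * Real.cos ((t • c) ⬝ᵥ x) :=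
      (continuous_integral_cos hg.integrable).comp (continuous_id.smul continuous_const)
    have h0 : ∫ x, g x * Real.cos (((0 : ℝ) • c) ⬝ᵥ x) = 1 := by simp [hg1]
    have hev : ∀ᶠ t : ℝ in 𝓝[>] 0, 0 < ∫ x, g x * Real.cos ((t • c) ⬝ᵥ x) := by
      refine nhdsWithin_le_nhds (hcont.continuousAt.eventually (lt_mem_nhds ?_))
      exact one_pos.trans_eq h0.symm
    obtain ⟨t, ht, ht0⟩ := (hev.and self_mem_nhdsWithin).exists
    have ht0' : (0 : ℝ) < t := ht0
    have := integrable_sq_of_tendsto_pow hG0.integrable hG0.nonneg (h1 0) (t • c) hNtop ht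
      (by rw [← hre]; exact hreal _)
    refine (this.const_mul (t ^ 2)⁻¹).congr (.of_forall fun x => ?_)
    simp only [smul_dotProduct, smul_eq_mul]
    field_simp
  have hcov := posDef_covMatrix hG0 (h1 0) hsq
  have hval : ∀ c, charDensity g c =
      (Real.exp (-(c ⬝ᵥ (covMatrix (G 0)).mulVec c) / 2) : ℝ) := fun c => by
    rw [← him, dotProduct_covMatrix_mulVec hsq]
    congr 1
    exact tendsto_nhds_unique (hreal c) ((tendsto_integral_cos_pow hG0.integrable hG0.nonneg (h1 0)
      c (hsq c)).comp hNtop)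
  have hπ : (0 : ℝ) < 2 * Real.pi := by positivity
  have hB : ((2 * Real.pi) • covMatrix (G 0))⁻¹.PosDef := (hcov.smul hπ).inv
  refine ⟨_, hB, eq_of_charDensity_eq hg.integrable ((integrable_gaussFn hB).const_mul _)
    hg.continuous ((continuous_gaussFn _).const_mul _) hg.nonneg
    (fun x => mul_nonneg (Real.sqrt_nonneg _) (gaussFn_pos _ _).le) fun c => ?_⟩
  rw [charDensity_gaussFn hB, hval,
    nonsing_inv_nonsing_inv _ (isUnit_iff_ne_zero.2 (hcov.smul hπ).det_pos.ne'), smul_mulVec,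
    dotProduct_smul, smul_eq_mul]
  congr 2
  field_simp
  ring

end GaussianLimit

section Regular

open Filter Topology

variable {n m : ℕ} {ni : Fin m → ℕ} {C : ∀ i, Matrix (Fin (ni i)) (Fin n) ℝ} {p : Fin m → ℝ}
  {𝒬 : Matrix (Fin n) (Fin n) ℝ} {R Q B : ∀ i, Matrix (Fin (ni i)) (Fin (ni i)) ℝ}
  {b : Fin m → Prop} {f : ∀ i, (Fin (ni i) → ℝ) → ℝ}

theorem posSemidef_sum_conj (hp : ∀ i, 0 < p i) (hB : ∀ i, (B i).PosDef) :
    (∑ i, p i • ((C i)ᵀ * B i * C i)).PosSemidef :=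
  posSemidef_sum _ fun i _ => by
    have := (hB i).posSemidef.conjTranspose_mul_mul_same (C i)
    rw [conjTranspose_eq_transpose_of_trivial] at this
    exact this.smul (hp i).le

theorem blIntegrand_gaussFn (x : Fin n → ℝ) : blIntegrand C p 𝒬 (fun i => gaussFn (B i)) x =
    gaussFn (𝒬 + ∑ i, p i • ((C i)ᵀ * B i * C i)) x := by
  simp only [blIntegrand, gaussFn, ← Real.exp_mul, ← Real.exp_sum, ← Real.exp_add]
  congr 1
  rw [add_mulVec, add_dotProduct, mul_add, sum_mulVec, sum_dotProduct, Finset.mul_sum]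
  congr 1
  refine Finset.sum_congr rfl fun i _ => ?_
  rw [smul_mulVec, smul_dotProduct, smul_eq_mul, ← mulVec_mulVec, ← mulVec_mulVec,
    mulVec_transpose, ← dotProduct_mulVec]
  ring

theorem blIntegral_gaussFn (hp : ∀ i, 0 < p i) (h𝒬 : 𝒬.PosDef) (hB : ∀ i, (B i).PosDef) :
    blIntegral C p 𝒬 (fun i x => √(B i).det * gaussFn (B i) x) =
      ((∏ i, ENNReal.ofReal ((B i).det) ^ p i) /
        ENNReal.ofReal ((𝒬 + ∑ i, p i • ((C i)ᵀ * B i * C i)).det)) ^ ((2 : ℝ)⁻¹) := by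
  have hA := h𝒬.add_posSemidef (posSemidef_sum_conj (C := C) hp hB)
  rw [blIntegral_const_mul (fun i => Real.sqrt_nonneg _) hp fun i x => (gaussFn_pos _ x).le,
    blIntegral]
  simp only [blIntegrand_gaussFn]
  rw [lintegral_gaussFn hA, div_eq_mul_inv, ENNReal.mul_rpow_of_nonneg _ _ (by norm_num), mul_comm,
    ← ENNReal.prod_rpow_of_nonneg (by norm_num)]
  congr 1
  refine Finset.prod_congr rfl fun i _ => ?_
  rw [← ENNReal.rpow_mul, mul_comm, ENNReal.rpow_mul, Real.sqrt_eq_rpow,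
    ← ENNReal.ofReal_rpow_of_pos (hB i).det_pos]
  norm_num

theorem circ_comp_neg_even {d : ℕ} (f : (Fin d → ℝ) → ℝ) (x : Fin d → ℝ) :
    circ f (fun y => f (-y)) (-x) = circ f (fun y => f (-y)) x := by
  refine integral_congr_ae (.of_forall fun w => ?_)
  simp only [← smul_neg]
  rw [mul_comm]
  congr 2 <;> congr 1 <;> abel

/-- The best constant over the class `Sandwiched` is attained on Gaussians. -/
theorem blSup_le_iSup_gaussian (hp : ∀ i, 0 < p i) (h𝒬 : 𝒬.PosDef) (hR : ∀ i, (R i).PosDef)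
    (hQ : ∀ i, (Q i).PosDef) : blSup C p 𝒬 R Q b ≤
      ⨆ (B : ∀ i, Matrix (Fin (ni i)) (Fin (ni i)) ℝ)
          (_ : (∀ i, (B i).PosDef) ∧ (∀ i, (R i - B i).PosSemidef) ∧
               (∀ i, b i → (B i - Q i).PosSemidef)),
          ((∏ i, ENNReal.ofReal ((B i).det) ^ p i) /
              ENNReal.ofReal ((𝒬 + ∑ i, p i • ((C i)ᵀ * B i * C i)).det)) ^ ((2 : ℝ)⁻¹) := by
  by_cases h0 : blSup C p 𝒬 R Q b = 0
  · rw [h0]; exact zero_le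
  obtain ⟨f, hf, hfe⟩ := exists_extremizer hp h𝒬 hR h0
  let G : ℕ → ∀ i, (Fin (ni i) → ℝ) → ℝ := fun k =>
    Nat.rec (fun i => circ (f i) fun x => f i (-x)) (fun _ g i => circ (g i) (g i)) k
  have hfn : Normalized R Q b fun i x => f i (-x) := fun i =>
    ⟨(hf i).1.comp_neg, by rw [integral_neg_eq_self, (hf i).2]⟩
  have hG : ∀ k, Normalized R Q b (G k) ∧ blIntegral C p 𝒬 (G k) = blSup C p 𝒬 R Q b := by
    intro k
    induction k with
    | zero => exact ⟨hf.circ hR hQ hfn, blIntegral_circ_eq_blSup hp h𝒬 hR hQ h0 hf hfn hfe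
        ((blIntegral_comp_neg f).trans hfe)⟩
    | succ k ih => exact ⟨ih.1.circ hR hQ ih.1,
        blIntegral_circ_eq_blSup hp h𝒬 hR hQ h0 ih.1 ih.1 ih.2 ih.2⟩
  obtain ⟨φ, g, hφ, hlim, hg, hge⟩ := exists_subseq_tendsto_extremizer hp h𝒬 hR h0
    (fun k => (hG k).1) (by simp only [(hG _).2]; exact tendsto_const_nhds)
  choose B hB hgB using fun i => exists_gaussFn_of_tendsto_circ (G := fun k => G k i) (hR i) (hQ i)
    ((hG 0).1 i).1 (circ_comp_neg_even (f i)) (fun k => ((hG k).1 i).2) (fun k => rfl) hφ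
    (hg i).1 (hg i).2 (hlim i)
  have hpos : ∀ i, 0 < √(B i).det := fun i => Real.sqrt_pos.2 (hB i).det_pos
  refine le_iSup₂_of_le B ⟨hB, fun i => ?_, fun i hb => ?_⟩ ?_
  · have := (hg i).1.convex
    rw [hgB i] at this
    exact this.posSemidef_sub (hpos i) (hR i) (hB i)
  · have := (hg i).1.concave hb
    rw [hgB i] at this
    exact this.posSemidef_sub (hpos i) (hQ i) (hB i)
  · rw [← hge, ← blIntegral_gaussFn hp h𝒬 hB]
    exact (congrArg _ (funext hgB)).le

theorem det_le_det_add {d : ℕ} {A E : Matrix (Fin d) (Fin d) ℝ} (hA : A.PosDef)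
    (hE : E.PosSemidef) : A.det ≤ (A + E).det := by
  have hAE := hA.add_posSemidef hE
  have h1 : ∫ x, gaussFn (A + E) x ≤ ∫ x, gaussFn A x := by
    refine integral_mono (integrable_gaussFn hAE) (integrable_gaussFn hA) fun x => ?_
    refine (posSemidef_sub_iff_gaussFn_le hAE hA).1 ?_ x
    rwa [add_sub_cancel_left]
  rw [integral_gaussFn hAE, integral_gaussFn hA, inv_le_inv₀ (Real.sqrt_pos.2 hAE.det_pos)
    (Real.sqrt_pos.2 hA.det_pos)] at h1
  exact (Real.sqrt_le_sqrt_iff hAE.det_pos.le).1 h1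

end Regular

section Smoothing

open Filter Topology

variable {d : ℕ} {f h : (Fin d → ℝ) → ℝ} {R Q : Matrix (Fin d) (Fin d) ℝ} {r : ℝ}

namespace LogConcaveFun

theorem concaveOn_log (hh : LogConcaveFun h) :
    ConcaveOn ℝ {x | 0 < h x} fun x => Real.log (h x) := by
  have hpos : ∀ {x y : Fin d → ℝ} {a b : ℝ}, 0 < h x → 0 < h y → 0 ≤ a → 0 ≤ b → a + b = 1 →
      0 < h (a • x + b • y) := fun hx hy ha hb hab =>
    lt_of_lt_of_le (mul_pos (Real.rpow_pos_of_pos hx _) (Real.rpow_pos_of_pos hy _))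
      (hh.2 _ _ _ _ ha hb hab)
  refine ⟨fun x hx y hy a b ha hb hab => hpos hx hy ha hb hab, fun x hx y hy a b ha hb hab => ?_⟩
  have hx' : 0 < h x := hx
  have hy' : 0 < h y := hy
  have h1 := Real.log_le_log (mul_pos (Real.rpow_pos_of_pos hx' _) (Real.rpow_pos_of_pos hy' _))
    (hh.2 x y a b ha hb hab)
  rwa [Real.log_mul (Real.rpow_pos_of_pos hx' _).ne' (Real.rpow_pos_of_pos hy' _).ne',
    Real.log_rpow hx', Real.log_rpow hy'] at h1

theorem continuousOn_interior (hh : LogConcaveFun h) :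
    ContinuousOn h (interior {x | 0 < h x}) := by
  refine (Real.continuous_exp.comp_continuousOn hh.concaveOn_log.continuousOn_interior).congr
    fun x hx => ?_
  exact (Real.exp_log (interior_subset hx : x ∈ {x | 0 < h x})).symm

/-- The restriction of a log-concave function to the interior of its support is log-concave. -/
theorem indicator_interior (hh : LogConcaveFun h) :
    LogConcaveFun ((interior {x | 0 < h x}).indicator h) := by
  have hnn : ∀ x, 0 ≤ (interior {x | 0 < h x}).indicator h x :=
    Set.indicator_nonneg fun x _ => hh.1 x
  refine ⟨hnn, fun x y a b ha hb hab => ?_⟩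
  rcases ha.eq_or_lt with rfl | ha'
  · obtain rfl : b = 1 := by linarith
    simp
  rcases hb.eq_or_lt with rfl | hb'
  · obtain rfl : a = 1 := by linarith
    simp
  by_cases hx : x ∈ interior {x | 0 < h x}
  · by_cases hy : y ∈ interior {x | 0 < h x}
    · rw [Set.indicator_of_mem hx, Set.indicator_of_mem hy,
        Set.indicator_of_mem (hh.concaveOn_log.1.interior hx hy ha hb hab)]
      exact hh.2 x y a b ha hb hab
    · rw [Set.indicator_of_notMem hy, Real.zero_rpow hb'.ne', mul_zero]
      exact hnn _
  · rw [Set.indicator_of_notMem hx, Real.zero_rpow ha'.ne', zero_mul]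
    exact hnn _

theorem measurable_indicator_interior (hh : LogConcaveFun h) :
    Measurable ((interior {x | 0 < h x}).indicator h) := by
  classical
  rw [← Set.piecewise_eq_indicator]
  exact hh.continuousOn_interior.measurable_piecewise continuousOn_const
    isOpen_interior.measurableSet

theorem indicator_interior_ae_eq (hh : LogConcaveFun h) :
    (interior {x | 0 < h x}).indicator h =ᵐ[volume] h := by
  have h0 := hh.concaveOn_log.1.addHaar_frontier volume
  filter_upwards [measure_eq_zero_iff_ae_notMem.1 h0] with x hx
  by_cases hxi : x ∈ interior {x | 0 < h x}
  · rw [Set.indicator_of_mem hxi]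
  · rw [Set.indicator_of_notMem hxi]
    have : ¬ 0 < h x := fun hpos => hx ⟨subset_closure hpos, hxi⟩
    exact le_antisymm (hh.1 x) (not_lt.1 this)

end LogConcaveFun

/-- Gaussian smoothing adapted to `g_Q`, with noise of covariance proportional to `(r Q)⁻¹`. -/
def smoothing (Q : Matrix (Fin d) (Fin d) ℝ) (r : ℝ) (f : (Fin d → ℝ) → ℝ) (x : Fin d → ℝ) : ℝ :=
  √(r • Q).det * ∫ y, f y * gaussFn (r • Q) (x - √(1 - r⁻¹) • y)

theorem integrable_mul_gaussFn_sub (hf : Integrable f) (hR : R.PosDef) (c : ℝ) (x : Fin d → ℝ) :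
    Integrable fun y => f y * gaussFn R (x - c • y) :=
  hf.mul_bdd (c := 1) ((continuous_gaussFn R).comp (by fun_prop)).aestronglyMeasurable
    (.of_forall fun y => by
      rw [Real.norm_of_nonneg (gaussFn_pos _ _).le]
      exact gaussFn_le_one hR.posSemidef _)

theorem integrable_prod_mul_gaussFn_sub (hf : Integrable f) (hR : R.PosDef) (c : ℝ) :
    Integrable fun q : (Fin d → ℝ) × (Fin d → ℝ) => f q.2 * gaussFn R (q.1 - c • q.2) := by
  have hm : AEStronglyMeasurable (fun q : (Fin d → ℝ) × (Fin d → ℝ) =>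
      f q.2 * gaussFn R (q.1 - c • q.2)) (volume.prod volume) :=
    hf.aestronglyMeasurable.comp_snd.mul
      ((continuous_gaussFn R).comp (by fun_prop)).aestronglyMeasurable
  refine (integrable_prod_iff' hm).2 ⟨.of_forall fun y =>
    ((integrable_gaussFn hR).comp_sub_right (c • y)).const_mul (f y), ?_⟩
  simp only [norm_mul, integral_const_mul, Real.norm_of_nonneg (gaussFn_pos _ _).le]
  simp only [integral_sub_right_eq_self (gaussFn R)]
  exact hf.norm.mul_const _

theorem integrable_smoothing (hf : Integrable f) (hQ : Q.PosDef) (hr : 0 < r) :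
    Integrable (smoothing Q r f) :=
  (integrable_prod_mul_gaussFn_sub hf (hQ.smul hr) _).integral_prod_left.const_mul _

theorem integral_smoothing (hf : Integrable f) (hQ : Q.PosDef) (hr : 0 < r) :
    ∫ x, smoothing Q r f x = ∫ x, f x := by
  have hR := hQ.smul hr
  simp only [smoothing, integral_const_mul]
  rw [integral_integral_swap (integrable_prod_mul_gaussFn_sub hf hR _)]
  simp only [integral_const_mul, integral_sub_right_eq_self (gaussFn (r • Q)), integral_gaussFn hR,
    integral_mul_const]
  rw [mul_comm, mul_assoc, inv_mul_cancel₀ (Real.sqrt_pos.2 hR.det_pos).ne', mul_one]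

theorem logConvexFun_exp_dotProduct (c : Fin d → ℝ) :
    LogConvexFun fun x => Real.exp (c ⬝ᵥ x) := by
  refine ⟨fun x => (Real.exp_pos _).le, fun x y a b _ _ _ => le_of_eq ?_⟩
  simp only
  rw [← Real.exp_mul, ← Real.exp_mul, ← Real.exp_add, dotProduct_add, dotProduct_smul,
    dotProduct_smul, smul_eq_mul, smul_eq_mul, mul_comm a, mul_comm b]

theorem gaussFn_sub (hR : R.IsHermitian) (x y : Fin d → ℝ) : gaussFn R (x - y) =
    gaussFn R x * (gaussFn R y * Real.exp (((2 * Real.pi) • R.mulVec y) ⬝ᵥ x)) := by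
  have hsymm : R.mulVec x ⬝ᵥ y = R.mulVec y ⬝ᵥ x := by
    have ht : Rᵀ = R := by rw [← conjTranspose_eq_transpose_of_trivial]; exact hR
    rw [dotProduct_comm, dotProduct_mulVec, ← mulVec_transpose, ht]
  simp only [gaussFn, ← Real.exp_add, mulVec_sub, sub_dotProduct, dotProduct_sub, smul_dotProduct,
    smul_eq_mul, hsymm]
  congr 1
  ring

theorem moreLogConvex_smoothing (hf : Integrable f) (hf0 : ∀ x, 0 ≤ f x) (hQ : Q.PosDef)
    (hr : 0 < r) : MoreLogConvex (smoothing Q r f) (r • Q) := by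
  have hR := hQ.smul hr
  set c := √(1 - r⁻¹) with hc
  let u : (Fin d → ℝ) → (Fin d → ℝ) → ℝ := fun x y => (f y * gaussFn (r • Q) (c • y)) *
    Real.exp (((2 * Real.pi) • (r • Q).mulVec (c • y)) ⬝ᵥ x)
  have hu : ∀ x y, f y * gaussFn (r • Q) (x - c • y) = gaussFn (r • Q) x * u x y := fun x y => by
    rw [gaussFn_sub hR.isHermitian]
    ring
  have hui : ∀ x, Integrable (u x) := fun x => by
    have h1 := (integrable_mul_gaussFn_sub hf hR c x).const_mul (gaussFn (r • Q) x)⁻¹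
    refine h1.congr (.of_forall fun y => ?_)
    simp only [hu]
    rw [inv_mul_cancel_left₀ (gaussFn_pos _ _).ne']
  refine ⟨_, (LogConvexFun.const (Real.sqrt_nonneg (r • Q).det)).mul (LogConvexFun.integral (h := u)
    (fun y => (LogConvexFun.const (mul_nonneg (hf0 y) (gaussFn_pos _ _).le)).mul
      (logConvexFun_exp_dotProduct _)) hui), funext fun x => ?_⟩
  simp only [smoothing, ← hc, hu, integral_const_mul]
  ring

theorem gaussFn_mul_gaussFn_sub (hQ : Q.IsHermitian) (hr : 1 ≤ r) (x t : Fin d → ℝ) :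
    gaussFn Q (√(1 - r⁻¹) • x + t) * gaussFn (r • Q) (x - √(1 - r⁻¹) • (√(1 - r⁻¹) • x + t)) =
      gaussFn Q x * gaussFn (r • Q) t := by
  have hsymm : Q.mulVec x ⬝ᵥ t = Q.mulVec t ⬝ᵥ x := by
    have ht : Qᵀ = Q := by rw [← conjTranspose_eq_transpose_of_trivial]; exact hQ
    rw [dotProduct_comm, dotProduct_mulVec, ← mulVec_transpose, ht]
  have hr0 : r ≠ 0 := by positivity
  have hs : √(1 - r⁻¹) ^ 2 = 1 - r⁻¹ := Real.sq_sqrt (sub_nonneg.2 (inv_le_one_of_one_le₀ hr))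
  set c := √(1 - r⁻¹)
  have hc : r * c ^ 2 = r - 1 := by rw [hs]; field_simp
  simp only [gaussFn, ← Real.exp_add]
  congr 1
  simp only [smul_mulVec, mulVec_add, mulVec_sub, mulVec_smul, add_dotProduct, dotProduct_add,
    sub_dotProduct, dotProduct_sub, smul_dotProduct, dotProduct_smul, smul_eq_mul, smul_add, hsymm]
  generalize Q.mulVec x ⬝ᵥ x = X
  generalize Q.mulVec t ⬝ᵥ t = T
  generalize Q.mulVec t ⬝ᵥ x = Y
  linear_combination (-Real.pi * ((c ^ 2 - 1) * X + 2 * c * Y + T)) * hc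

theorem smoothing_eq (hQ : Q.IsHermitian) (hr : 1 ≤ r) (x : Fin d → ℝ) :
    smoothing Q r (fun y => gaussFn Q y * h y) x = gaussFn Q x * (√(r • Q).det *
      ∫ t, h (√(1 - r⁻¹) • x + t) * gaussFn (r • Q) t) := by
  rw [smoothing, ← integral_add_left_eq_self (μ := volume) (fun y => gaussFn Q y * h y *
    gaussFn (r • Q) (x - √(1 - r⁻¹) • y)) (√(1 - r⁻¹) • x), mul_left_comm,
    ← integral_const_mul (gaussFn Q x)]
  congr 1
  refine integral_congr_ae (.of_forall fun t => ?_)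
  simp only
  linear_combination h (√(1 - r⁻¹) • x + t) * gaussFn_mul_gaussFn_sub hQ hr x t

theorem integrable_mul_gaussFn_add (hf : Integrable fun y => gaussFn Q y * h y) (hQ : Q.PosDef)
    (hr : 1 ≤ r) (x : Fin d → ℝ) :
    Integrable fun t => h (√(1 - r⁻¹) • x + t) * gaussFn (r • Q) t := by
  have hR := hQ.smul (one_pos.trans_le hr)
  have h1 := ((integrable_mul_gaussFn_sub hf hR (√(1 - r⁻¹)) x).comp_add_left
    (√(1 - r⁻¹) • x)).const_mul (gaussFn Q x)⁻¹
  refine h1.congr (.of_forall fun t => ?_)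
  have h2 := gaussFn_mul_gaussFn_sub hQ.isHermitian hr x t
  simp only
  rw [mul_right_comm, h2]
  field_simp [(gaussFn_pos Q x).ne']

theorem moreLogConcave_smoothing (hh : LogConcaveFun h) (hm : Measurable h)
    (hf : Integrable fun y => gaussFn Q y * h y) (hQ : Q.PosDef) (hr : 1 ≤ r) :
    MoreLogConcave (smoothing Q r fun y => gaussFn Q y * h y) Q := by
  have hr0 : 0 < r := by positivity
  have hR := hQ.smul hr0
  refine ⟨_, (LogConcaveFun.const (Real.sqrt_nonneg (r • Q).det)).mul (LogConcaveFun.integral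
    (h := fun x t => h (√(1 - r⁻¹) • x + t) * gaussFn (r • Q) t)
    (fun x t => mul_nonneg (hh.1 _) (gaussFn_pos _ _).le) ?_ ?_ ?_),
    funext fun x => smoothing_eq hQ.isHermitian hr x⟩
  · intro z z' w w' a b ha hb hab
    have hG := (logConcaveFun_gaussFn hR.posSemidef).2 w w' a b ha hb hab
    have hH := hh.2 (√(1 - r⁻¹) • z + w) (√(1 - r⁻¹) • z' + w') a b ha hb hab
    have e : a • (√(1 - r⁻¹) • z + w) + b • (√(1 - r⁻¹) • z' + w') =
        √(1 - r⁻¹) • (a • z + b • z') + (a • w + b • w') := by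
      module
    rw [e] at hH
    rw [Real.mul_rpow (hh.1 _) (gaussFn_pos _ _).le, Real.mul_rpow (hh.1 _) (gaussFn_pos _ _).le,
      mul_mul_mul_comm]
    exact mul_le_mul hH hG (mul_nonneg (Real.rpow_nonneg (gaussFn_pos _ _).le _)
      (Real.rpow_nonneg (gaussFn_pos _ _).le _)) (hh.1 _)
  · exact fun x => (hm.comp (by fun_prop)).mul (continuous_gaussFn _).measurable
  · exact fun x => integrable_mul_gaussFn_add hf hQ hr x

end Smoothing

section SmoothingLimit

open Filter Topology

variable {d : ℕ} {f h : (Fin d → ℝ) → ℝ} {R Q : Matrix (Fin d) (Fin d) ℝ} {r : ℝ}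

theorem gaussFn_smul_inv_sqrt (hr : 0 < r) (s : Fin d → ℝ) :
    gaussFn (r • Q) ((√r)⁻¹ • s) = gaussFn Q s := by
  have hss : r * ((√r)⁻¹ * (√r)⁻¹) = 1 := by
    rw [← mul_inv, Real.mul_self_sqrt hr.le, mul_inv_cancel₀ hr.ne']
  simp only [gaussFn, smul_mulVec, mulVec_smul, smul_dotProduct, dotProduct_smul, smul_eq_mul]
  congr 1
  linear_combination (-Real.pi * (Q *ᵥ s ⬝ᵥ s)) * hss

theorem smoothing_eq_integral_smul (hQ : Q.IsHermitian) (hr : 1 ≤ r) (x : Fin d → ℝ) :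
    smoothing Q r (fun y => gaussFn Q y * h y) x = gaussFn Q x * (√Q.det *
      ∫ s, h (√(1 - r⁻¹) • x + (√r)⁻¹ • s) * gaussFn Q s) := by
  have hr0 : 0 < r := by positivity
  have hsr : 0 < √r := Real.sqrt_pos.2 hr0
  have h1 := Measure.integral_comp_smul (volume : Measure (Fin d → ℝ))
    (fun t => h (√(1 - r⁻¹) • x + t) * gaussFn (r • Q) t) (√r)⁻¹
  have h3 : √(r • Q).det = √r ^ d * √Q.det := by
    rw [det_smul, Fintype.card_fin, Real.sqrt_mul (by positivity)]
    congr 1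
    rw [Real.sqrt_eq_iff_mul_self_eq (by positivity) (by positivity), ← mul_pow,
      Real.mul_self_sqrt hr0.le]
  simp only [gaussFn_smul_inv_sqrt hr0, Module.finrank_fin_fun, inv_pow, inv_inv, smul_eq_mul] at h1
  rw [abs_of_pos (by positivity)] at h1
  rw [smoothing_eq hQ hr, h1, h3]
  ring

theorem ofReal_le_liminf_smoothing (hh : ∀ x, 0 ≤ h x) (hm : Measurable h)
    (hf : Integrable fun y => gaussFn Q y * h y) (hQ : Q.PosDef) {x : Fin d → ℝ}
    (hx : h x = 0 ∨ ContinuousAt h x) {r : ℕ → ℝ} (hr1 : ∀ k, 1 ≤ r k)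
    (hr : Tendsto r atTop atTop) :
    ENNReal.ofReal (gaussFn Q x * h x) ≤ liminf (fun k =>
      ENNReal.ofReal (smoothing Q (r k) (fun y => gaussFn Q y * h y) x)) atTop := by
  rcases hx with hx | hx
  · simp [hx]
  have hdet : 0 < √Q.det := Real.sqrt_pos.2 hQ.det_pos
  set c : ℝ := gaussFn Q x * √Q.det with hc
  have hc0 : 0 ≤ c := mul_nonneg (gaussFn_pos _ _).le hdet.le
  have hnn : ∀ k s, 0 ≤ c * (h (√(1 - (r k)⁻¹) • x + (√(r k))⁻¹ • s) * gaussFn Q s) := fun k s =>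
    mul_nonneg hc0 (mul_nonneg (hh _) (gaussFn_pos _ _).le)
  have hlim : ∀ s, Tendsto (fun k => ENNReal.ofReal
      (c * (h (√(1 - (r k)⁻¹) • x + (√(r k))⁻¹ • s) * gaussFn Q s))) atTop
      (𝓝 (ENNReal.ofReal (c * (h x * gaussFn Q s)))) := fun s => by
    have hp : Tendsto (fun k => √(1 - (r k)⁻¹) • x + (√(r k))⁻¹ • s) atTop (𝓝 x) := by
      have h1 : Tendsto (fun k => √(1 - (r k)⁻¹)) atTop (𝓝 (√(1 - 0))) :=
        ((tendsto_inv_atTop_zero.comp hr).const_sub 1).sqrt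
      have h2 : Tendsto (fun k => (√(r k))⁻¹) atTop (𝓝 0) :=
        tendsto_inv_atTop_zero.comp (Real.tendsto_sqrt_atTop.comp hr)
      have := (h1.smul_const x).add (h2.smul_const s)
      simpa using this
    exact (ENNReal.continuous_ofReal.tendsto _).comp
      (((hx.tendsto.comp hp).mul_const _).const_mul c)
  have hL : ENNReal.ofReal (gaussFn Q x * h x) =
      ∫⁻ s, ENNReal.ofReal (c * (h x * gaussFn Q s)) := by
    rw [← ofReal_integral_eq_lintegral_ofReal (((integrable_gaussFn hQ).const_mul _).const_mul _)
      (.of_forall fun s => mul_nonneg hc0 (mul_nonneg (hh _) (gaussFn_pos _ _).le)),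
      integral_const_mul, integral_const_mul, integral_gaussFn hQ, hc]
    congr 1
    field_simp
  have hS : ∀ k, ENNReal.ofReal (smoothing Q (r k) (fun y => gaussFn Q y * h y) x) =
      ∫⁻ s, ENNReal.ofReal (c * (h (√(1 - (r k)⁻¹) • x + (√(r k))⁻¹ • s) * gaussFn Q s)) :=
    fun k => by
    have hrk : 0 < r k := one_pos.trans_le (hr1 k)
    have hi := (integrable_mul_gaussFn_add hf hQ (hr1 k) x).comp_smul
      (inv_pos.2 (Real.sqrt_pos.2 hrk)).ne'
    simp only [gaussFn_smul_inv_sqrt hrk] at hi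
    rw [smoothing_eq_integral_smul hQ.isHermitian (hr1 k), ← mul_assoc, ← hc,
      ← ofReal_integral_eq_lintegral_ofReal (hi.const_mul c) (.of_forall (hnn k)),
      integral_const_mul]
  rw [hL]
  simp only [hS, ← (hlim _).liminf_eq]
  refine lintegral_liminf_le fun k => (Measurable.const_mul ?_ c).ennreal_ofReal
  exact (hm.comp (by fun_prop)).mul (continuous_gaussFn Q).measurable

/-- Approximation of a function that is more log-concave than `g_Q` by functions that are
moreover more log-convex than some Gaussian. -/
theorem MoreLogConcave.exists_seq_sandwiched (hf : MoreLogConcave f Q) (hfi : Integrable f)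
    (hQ : Q.PosDef) : ∃ (R : ℕ → Matrix (Fin d) (Fin d) ℝ) (F : ℕ → (Fin d → ℝ) → ℝ),
      (∀ k, (R k).PosDef) ∧ (∀ k, Sandwiched (R k) Q True (F k)) ∧
      (∀ k, ∫ x, F k x = ∫ x, f x) ∧
      ∀ᵐ x, ENNReal.ofReal (f x) ≤ liminf (fun k => ENNReal.ofReal (F k x)) atTop := by
  obtain ⟨h, hh, rfl⟩ := hf
  set h' := (interior {x | 0 < h x}).indicator h with hdef
  have hh' : LogConcaveFun h' := hh.indicator_interior
  have hae : (fun x => gaussFn Q x * h' x) =ᵐ[volume] fun x => gaussFn Q x * h x :=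
    hh.indicator_interior_ae_eq.mono fun x hx => by simp only [hdef, hx]
  have hi' : Integrable fun x => gaussFn Q x * h' x := hfi.congr hae.symm
  set r : ℕ → ℝ := fun k => k + 1 with hrdef
  have hr1 : ∀ k, 1 ≤ r k := fun k => by simp [hrdef]
  have hr0 : ∀ k, 0 < r k := fun k => one_pos.trans_le (hr1 k)
  have hr : Tendsto r atTop atTop :=
    tendsto_atTop_add_const_right _ _ tendsto_natCast_atTop_atTop
  refine ⟨fun k => r k • Q, fun k => smoothing Q (r k) fun x => gaussFn Q x * h' x,
    fun k => hQ.smul (hr0 k), fun k => ⟨moreLogConvex_smoothing hi'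
      (fun x => mul_nonneg (gaussFn_pos _ _).le (hh'.1 x)) hQ (hr0 k),
      fun _ => moreLogConcave_smoothing hh' hh.measurable_indicator_interior hi' hQ (hr1 k),
      integrable_smoothing hi' hQ (hr0 k)⟩,
    fun k => (integral_smoothing hi' hQ (hr0 k)).trans (integral_congr_ae hae), ?_⟩
  filter_upwards [hae] with x hx
  rw [← hx]
  refine ofReal_le_liminf_smoothing hh'.1 hh.measurable_indicator_interior hi' hQ ?_ hr1 hr
  by_cases hxi : x ∈ interior {x | 0 < h x}
  · right
    have h1 := isOpen_interior.mem_nhds hxi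
    refine (hh.continuousOn_interior.continuousAt h1).congr ?_
    filter_upwards [h1] with y hy
    rw [hdef, Set.indicator_of_mem hy]
  · exact .inl (Set.indicator_of_notMem hxi _)

end SmoothingLimit

section Final

open Filter Topology

theorem prod_rpow_liminf_le {ι : Type*} (s : Finset ι) {p : ι → ℝ} (hp : ∀ i, 0 < p i)
    (u : ι → ℕ → ℝ≥0∞) :
    ∏ i ∈ s, liminf (u i) atTop ^ p i ≤ liminf (fun k => ∏ i ∈ s, u i k ^ p i) atTop := by
  classical
  induction s using Finset.induction_on with
  | empty => simp
  | insert i s hi ih =>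
    simp only [Finset.prod_insert hi]
    have h1 : liminf (u i) atTop ^ p i = liminf (fun k => u i k ^ p i) atTop :=
      (ENNReal.orderIsoRpow (p i) (hp i)).liminf_apply
    rw [h1]
    exact (mul_le_mul_right ih _).trans ENNReal.le_liminf_mul

theorem ae_comp_mulVec_of_ae {n d : ℕ} {C : Matrix (Fin d) (Fin n) ℝ}
    (hC : Function.Surjective C.mulVec) {P : (Fin d → ℝ) → Prop} (hP : ∀ᵐ y, P y) :
    ∀ᵐ x, P (C.mulVec x) := by
  obtain ⟨c, -, hc⟩ := C.mulVecLin.exists_map_addHaar_eq_smul_addHaar volume volume hC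
  have hm : Measurable C.mulVecLin := C.mulVecLin.continuous_of_finiteDimensional.measurable
  refine ae_of_ae_map hm.aemeasurable (p := P) ?_
  rw [hc]
  exact Measure.ae_smul_measure hP c

theorem det_le_det_add_of_posSemidef {d : ℕ} {A E : Matrix (Fin d) (Fin d) ℝ} (hA : A.PosSemidef)
    (hE : E.PosSemidef) : A.det ≤ (A + E).det := by
  by_cases h : A.det = 0
  · rw [h]
    exact (hA.add hE).det_nonneg
  · exact det_le_det_add (hA.posDef_iff_det_ne_zero.2 h) hE

variable {n m : ℕ} {ni : Fin m → ℕ} {C : ∀ i, Matrix (Fin (ni i)) (Fin n) ℝ} {p : Fin m → ℝ}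
  {𝒬 : Matrix (Fin n) (Fin n) ℝ} {f : ∀ i, (Fin (ni i) → ℝ) → ℝ}

theorem ofReal_blIntegrand (hp : ∀ i, 0 < p i) (hf : ∀ i x, 0 ≤ f i x) (x : Fin n → ℝ) :
    ENNReal.ofReal (blIntegrand C p 𝒬 f x) =
      ENNReal.ofReal (gaussFn 𝒬 x) * ∏ i, ENNReal.ofReal (f i ((C i).mulVec x)) ^ p i := by
  rw [blIntegrand, ENNReal.ofReal_mul (gaussFn_pos _ _).le,
    ENNReal.ofReal_prod_of_nonneg fun i _ => Real.rpow_nonneg (hf i _) _]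
  congr 1
  exact Finset.prod_congr rfl fun i _ => (ENNReal.ofReal_rpow_of_nonneg (hf i _) (hp i).le).symm

/-- Lower semicontinuity of the Brascamp–Lieb functional. -/
theorem blIntegral_le_liminf (hC : ∀ i, Function.Surjective (C i).mulVec) (hp : ∀ i, 0 < p i)
    (hf : ∀ i x, 0 ≤ f i x) {F : ℕ → ∀ i, (Fin (ni i) → ℝ) → ℝ} (hF : ∀ k i x, 0 ≤ F k i x)
    (hFc : ∀ k i, Continuous (F k i)) (hlim : ∀ i, ∀ᵐ y, ENNReal.ofReal (f i y) ≤
      liminf (fun k => ENNReal.ofReal (F k i y)) atTop) {𝒬' : ℕ → Matrix (Fin n) (Fin n) ℝ}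
    (h𝒬 : Tendsto 𝒬' atTop (𝓝 𝒬)) :
    blIntegral C p 𝒬 f ≤ liminf (fun k => blIntegral C p (𝒬' k) (F k)) atTop := by
  have hae : ∀ᵐ x, ∀ i, ENNReal.ofReal (f i ((C i).mulVec x)) ≤
      liminf (fun k => ENNReal.ofReal (F k i ((C i).mulVec x))) atTop :=
    ae_all_iff.2 fun i => ae_comp_mulVec_of_ae (hC i) (hlim i)
  refine (lintegral_mono_ae (hae.mono fun x hx => ?_)).trans (lintegral_liminf_le fun k =>
    (continuous_blIntegrand (C := C) (𝒬 := 𝒬' k) hp (hFc k)).measurable.ennreal_ofReal)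
  have hg : Tendsto (fun k => ENNReal.ofReal (gaussFn (𝒬' k) x)) atTop
      (𝓝 (ENNReal.ofReal (gaussFn 𝒬 x))) := by
    have hc : Continuous fun M : Matrix (Fin n) (Fin n) ℝ => ENNReal.ofReal (gaussFn M x) := by
      unfold gaussFn
      exact ENNReal.continuous_ofReal.comp (by fun_prop)
    exact (hc.tendsto 𝒬).comp h𝒬
  simp only [ofReal_blIntegrand hp hf, ofReal_blIntegrand hp (hF _)]
  rw [← hg.liminf_eq]
  refine le_trans ?_ ENNReal.le_liminf_mul
  refine mul_le_mul_right (le_trans ?_ (prod_rpow_liminf_le _ hp _)) _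
  exact Finset.prod_le_prod' fun i _ => ENNReal.rpow_le_rpow (hx i) (hp i).le

end Final

/-- Regularized Brascamp–Lieb inequality with mixed log-convexity/log-concavity
assumptions (forward form). -/
theorem regularized_brascamp_lieb_forward
    {n m : ℕ} (hm : 1 ≤ m) {ni : Fin m → ℕ}
    (C : ∀ i, Matrix (Fin (ni i)) (Fin n) ℝ)
    (hCsurj : ∀ i, Function.Surjective (C i).mulVec)
    (p : Fin m → ℝ) (hp : ∀ i, 0 < p i)
    (𝒬 : Matrix (Fin n) (Fin n) ℝ) (h𝒬 : 𝒬.PosSemidef)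
    (I : Finset (Fin m))
    (Q : ∀ i, Matrix (Fin (ni i)) (Fin (ni i)) ℝ) (hQ : ∀ i, (Q i).PosDef)
    (f : ∀ i, (Fin (ni i) → ℝ) → ℝ)
    (hfint : ∀ i, Integrable (f i))
    (hfI : ∀ i ∈ I, MoreLogConvex (f i) (Q i))
    (hfIc : ∀ i ∉ I, MoreLogConcave (f i) (Q i)) :
    (∫⁻ x : Fin n → ℝ, ENNReal.ofReal
        (Real.exp (-Real.pi * (𝒬.mulVec x ⬝ᵥ x)) * ∏ i, f i ((C i).mulVec x) ^ p i)) ≤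
      (⨆ (B : ∀ i, Matrix (Fin (ni i)) (Fin (ni i)) ℝ)
          (_ : (∀ i, (B i).PosDef) ∧ (∀ i ∈ I, (Q i - B i).PosSemidef) ∧
               (∀ i ∉ I, (B i - Q i).PosSemidef)),
          ((∏ i, ENNReal.ofReal ((B i).det) ^ p i) /
              ENNReal.ofReal ((𝒬 + ∑ i, p i • ((C i)ᵀ * B i * C i)).det)) ^ ((2 : ℝ)⁻¹)) *
        ∏ i, ENNReal.ofReal (∫ y, f i y) ^ p i := by
  have happrox : ∀ i, ∃ (R : ℕ → Matrix (Fin (ni i)) (Fin (ni i)) ℝ)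
      (F : ℕ → (Fin (ni i) → ℝ) → ℝ), (∀ k, (R k).PosDef) ∧
      (∀ k, Sandwiched (R k) (Q i) (i ∉ I) (F k)) ∧ (∀ k, ∫ x, F k x = ∫ x, f i x) ∧
      (∀ᵐ x, ENNReal.ofReal (f i x) ≤
        Filter.liminf (fun k => ENNReal.ofReal (F k x)) Filter.atTop) ∧
      (i ∈ I → ∀ k, R k = Q i) := fun i => by
    by_cases hi : i ∈ I
    · exact ⟨fun _ => Q i, fun _ => f i, fun _ => hQ i,
        fun _ => ⟨hfI i hi, fun h => absurd hi h, hfint i⟩, fun _ => rfl, by simp, fun _ _ => rfl⟩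
    · obtain ⟨R, F, h1, h2, h3, h4⟩ := (hfIc i hi).exists_seq_sandwiched (hfint i) (hQ i)
      exact ⟨R, F, h1, fun k => ⟨(h2 k).convex, fun _ => (h2 k).concave trivial,
        (h2 k).integrable⟩, h3, h4, fun h => absurd h hi⟩
  choose R F hR hF hFint hlim hRQ using happrox
  have hf0 : ∀ i x, 0 ≤ f i x := fun i x => by
    by_cases hi : i ∈ I
    · exact (hfI i hi).nonneg x
    · obtain ⟨h, hh, he⟩ := hfIc i hi
      rw [he]
      exact mul_nonneg (gaussFn_pos _ _).le (hh.1 x)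
  set 𝒬' : ℕ → Matrix (Fin n) (Fin n) ℝ := fun k => 𝒬 + (1 / ((k : ℝ) + 1)) • 1 with h𝒬'
  have hpert : ∀ k : ℕ, ((1 / ((k : ℝ) + 1)) • (1 : Matrix (Fin n) (Fin n) ℝ)).PosDef := fun k =>
    PosDef.one.smul (by positivity)
  have htends : Filter.Tendsto 𝒬' Filter.atTop (nhds 𝒬) := by
    have := (tendsto_one_div_add_atTop_nhds_zero_nat (𝕜 := ℝ)).smul_const
      (1 : Matrix (Fin n) (Fin n) ℝ)
    simpa [h𝒬'] using this.const_add 𝒬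
  have hle := blIntegral_le_liminf hCsurj hp hf0 (F := fun k i => F i k)
    (fun k i => (hF i k).nonneg) (fun k i => (hF i k).continuous) hlim htends
  refine hle.trans ((Filter.liminf_le_liminf (.of_forall fun k => ?_)).trans_eq
    (Filter.liminf_const _))
  have h𝒬k : (𝒬' k).PosDef := (hpert k).posSemidef_add h𝒬
  refine (blIntegral_le_blSup_mul hp (fun i => hR i k) fun i => hF i k).trans ?_
  simp only [hFint]
  refine mul_le_mul_left ((blSup_le_iSup_gaussian hp h𝒬k (fun i => hR i k) hQ).trans ?_) _
  refine iSup₂_le fun B hB => le_iSup₂_of_le B ⟨hB.1, fun i hi => ?_, hB.2.2⟩ ?_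
  · rw [← hRQ i hi k]
    exact hB.2.1 i
  · refine ENNReal.rpow_le_rpow (ENNReal.div_le_div_left (ENNReal.ofReal_le_ofReal ?_) _)
      (by norm_num)
    rw [h𝒬', add_right_comm]
    exact det_le_det_add_of_posSemidef (h𝒬.add (posSemidef_sum_conj hp hB.1)) (hpert k).posSemidef
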